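/- arXiv:0808.1442 — 2 statements merged into one kernel-verified Lean document; each statement's English description precedes it below -/
import Mathlib

section
/- Let τ ∈ ℍ and u, v ∈ ℂ with u, v ∉ ℤτ + ℤ, and write a = e^{2πiu}, b = e^{2πiv}. Then: (1) μ(u,v;τ) = μ(v,u;τ); (2) μ(u+1,v;τ) = −μ(u,v;τ); (3) a^{−1}·b·q^{−1/2}·μ(u+τ,v;τ) = −μ(u,v;τ) + a^{−1/2}·b^{1/2}·q^{−1/8}, where a^{−1/2} = e^{−πiu}, b^{1/2} = e^{πiv}, q^{−1/2} = e^{−πiτ}, q^{−1/8} = e^{−πiτ/4}; (4) μ(u,v;τ+1) = e^{−πi/4}·μ(u,v;τ); (5) (τ/i)^{−1/2}·e^{πi(u−v)²/τ}·μ(u/τ, v/τ; −1/τ) = −μ(u,v;τ) + (1/2)·𝔥(u−v;τ), where 𝔥(z;τ) = ∫_{−∞}^{∞} e^{πix²τ − 2πxz}/cosh(πx) dx is the Mordell integral and (τ/i)^{−1/2} is the principal branch. -/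
noncomputable section
open Complex Real

/-- `q = e^{2πiτ}`. -/
def nome (τ : ℂ) : ℂ := Complex.exp (2 * (π : ℂ) * I * τ)

/-- Jacobi theta `θ(v;τ) = Σ_{ν∈ℤ+1/2} (−1)^{ν−1/2} e^{2πivν} q^{ν²/2}`. -/
def jtheta (v τ : ℂ) : ℂ :=
  ∑' n : ℤ, (-1 : ℂ) ^ n * Complex.exp (2 * (π : ℂ) * I * v * ((n : ℂ) + 1 / 2)) *
    Complex.exp ((π : ℂ) * I * τ * ((n : ℂ) + 1 / 2) ^ 2)

/-- Zwegers's μ-function. -/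
def mu (u v τ : ℂ) : ℂ :=
  (Complex.exp ((π : ℂ) * I * u) / jtheta v τ) *
    ∑' n : ℤ, (-Complex.exp (2 * (π : ℂ) * I * v)) ^ n * nome τ ^ ((n * (n + 1)) / 2 : ℤ) /
      (1 - Complex.exp (2 * (π : ℂ) * I * u) * nome τ ^ (n : ℤ))

/-- The Mordell integral `𝔥(z;τ) = ∫_ℝ e^{πix²τ−2πxz}/cosh(πx) dx`. -/
def mordell (z τ : ℂ) : ℂ :=
  ∫ x : ℝ, Complex.exp ((π : ℂ) * I * (x : ℂ) ^ 2 * τ - 2 * (π : ℂ) * (x : ℂ) * z) /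
    Complex.cosh ((π : ℂ) * (x : ℂ))

/-!
A function that is holomorphic off the lattice `ℤτ + ℤ`, has removable singularities there and is
multiplied by constants `1` and `e^{-2πiu}` under `z ↦ z + 1` and `z ↦ z + τ` vanishes when `u` is
not a lattice point: a unitary twist makes its modulus doubly periodic, hence it is constant by
Liouville, and the multipliers force the constant to be `0`.

With `A(u, v) = θ(v) μ(u, v)`, the difference `A(u, v) θ(u) - A(v, u) θ(v)` is such a function of
`v`; this gives the symmetry of `μ`, and also that `θ` has no zeros off the lattice. The shift
`u ↦ u + τ` only reindexes the sum defining `μ`.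

The Mordell integral satisfies two functional equations: `𝔥(z) + 𝔥(z + 1)` is a Gaussian integral,
and shifting the contour by `i` relates `𝔥(z)` and `𝔥(z + τ)` through the residue at `i/2`.
They turn the defect of the law of `μ` under `τ ↦ -1/τ`, multiplied by `θ(u)`, into a function of
`u` with the multipliers `1` and `e^{-2πiv}`, which therefore vanishes.
-/

open Filter Topology Set MeasureTheory Function
open scoped FourierTransform

theorem exists_differentiable_eqOn_compl {S : Set ℂ} {f : ℂ → ℂ}
    (hS : ∀ c, ∀ᶠ z in 𝓝[≠] c, z ∉ S) (hf : ∀ z ∉ S, DifferentiableAt ℂ f z)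
    (hsing : ∀ c ∈ S, Tendsto (fun z ↦ (z - c) * f z) (𝓝[≠] c) (𝓝 0)) :
    ∃ g : ℂ → ℂ, Differentiable ℂ g ∧ EqOn g f Sᶜ := by
  have hlim : ∀ z ∉ S, limUnder (𝓝[≠] z) f = f z := fun z hz ↦
    ((hf z hz).continuousAt.tendsto.mono_left nhdsWithin_le_nhds).limUnder_eq
  refine ⟨fun z ↦ limUnder (𝓝[≠] z) f, fun c ↦ ?_, hlim⟩
  by_cases hc : c ∈ S
  · have hnear : ∀ᶠ z in 𝓝 c, z ≠ c → z ∉ S := eventually_nhdsWithin_iff.mp (hS c)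
    have hlittle : (fun z ↦ f z - f c) =o[𝓝[≠] c] fun z ↦ (z - c)⁻¹ := by
      refine (Asymptotics.isLittleO_iff_tendsto' ?_).mpr ?_
      · filter_upwards [self_mem_nhdsWithin] with z hz h
        exact absurd (sub_eq_zero.mp (inv_eq_zero.mp h)) hz
      · have hconst : Tendsto (fun z ↦ (z - c) * f c) (𝓝[≠] c) (𝓝 0) := by
          refine (Continuous.tendsto' ?_ c 0 (by simp)).mono_left nhdsWithin_le_nhds
          fun_prop
        simpa [mul_comm, sub_mul, mul_sub] using (hsing c hc).sub hconst
    have hupdate : DifferentiableOn ℂ (update f c (limUnder (𝓝[≠] c) f))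
        {z | z ≠ c → z ∉ S} :=
      Complex.differentiableOn_update_limUnder_of_isLittleO hnear
        (fun z hz ↦ (hf z (hz.1 hz.2)).differentiableWithinAt) hlittle
    refine (hupdate.differentiableAt hnear).congr_of_eventuallyEq ?_
    filter_upwards [hnear] with z hz
    rcases eq_or_ne z c with rfl | hzc
    · simp
    · rw [update_of_ne hzc, hlim z (hz hzc)]
  · have hnear : ∀ᶠ z in 𝓝 c, z ∉ S := by
      filter_upwards [eventually_nhdsWithin_iff.mp (hS c)] with z hz
      rcases eq_or_ne z c with rfl | hzc
      exacts [hc, hz hzc]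
    exact (hf c hc).congr_of_eventuallyEq (hnear.mono hlim)

section Lattice

variable (L : PeriodPair)

theorem eventually_notMem_lattice (c : ℂ) : ∀ᶠ z in 𝓝[≠] c, z ∉ L.lattice := by
  rw [eventually_nhdsWithin_iff]
  filter_upwards [L.compl_lattice_sdiff_singleton_mem_nhds c] with z hz hzc hzL
  exact hz ⟨hzL, hzc⟩

theorem dense_compl_lattice : Dense (L.lattice : Set ℂ)ᶜ := fun c ↦
  mem_closure_iff_frequently.mpr <|
    (eventually_notMem_lattice L c).frequently.filter_mono nhdsWithin_le_nhds

theorem exists_forall_eq_of_norm_add_lattice {g : ℂ → ℂ} (hg : Differentiable ℂ g)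
    (hper : ∀ ω ∈ L.lattice, ∀ z, ‖g (z + ω)‖ = ‖g z‖) : ∃ K, ∀ z, g z = K := by
  obtain ⟨C, hC⟩ := (ZSpan.fundamentalDomain_isBounded L.basis).isCompact_closure
    |>.exists_bound_of_continuousOn hg.continuous.continuousOn
  have hbound : ∀ z, ‖g z‖ ≤ C := fun z ↦ by
    have hfloor : (ZSpan.floor L.basis z : ℂ) ∈ L.lattice := by
      rw [L.lattice_eq_span_range_basis]
      exact SetLike.coe_mem _
    rw [← sub_add_cancel z (ZSpan.floor L.basis z : ℂ), hper _ hfloor]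
    exact hC _ (subset_closure (ZSpan.fract_mem_fundamentalDomain L.basis z))
  refine ⟨g 0, fun z ↦ hg.apply_eq_apply_of_bounded ?_ z 0⟩
  exact isBounded_iff_forall_norm_le.mpr ⟨C, forall_mem_range.mpr hbound⟩

theorem norm_add_lattice_of_generators {f : ℂ → ℂ}
    (h₁ : ∀ z ∉ L.lattice, ‖f (z + L.ω₁)‖ = ‖f z‖)
    (h₂ : ∀ z ∉ L.lattice, ‖f (z + L.ω₂)‖ = ‖f z‖) {ω : ℂ} (hω : ω ∈ L.lattice) :
    ∀ z ∉ L.lattice, ‖f (z + ω)‖ = ‖f z‖ := by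
  have hclosure : L.lattice.toAddSubgroup = AddSubgroup.closure {L.ω₁, L.ω₂} :=
    Submodule.span_int_eq_addSubgroupClosure _
  have hmem : ∀ {x}, x ∈ AddSubgroup.closure {L.ω₁, L.ω₂} → x ∈ L.lattice := fun hx ↦
    (hclosure ▸ hx : _ ∈ L.lattice.toAddSubgroup)
  replace hω : ω ∈ AddSubgroup.closure {L.ω₁, L.ω₂} := hclosure ▸ hω
  induction hω using AddSubgroup.closure_induction with
  | mem x hx =>
    rcases hx with rfl | rfl
    exacts [h₁, h₂]
  | zero => simp
  | add x y hx _ ihx ihy =>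
    intro z hz
    rw [← add_assoc, ihy _ (by rwa [L.lattice.add_mem_iff_left (hmem hx)]), ihx z hz]
  | neg x hx ih =>
    intro z hz
    rw [← ih _ (by rwa [L.lattice.add_mem_iff_left (neg_mem (hmem hx))]), neg_add_cancel_right]

theorem exists_forall_notMem_lattice_eq {f : ℂ → ℂ}
    (hf : ∀ z ∉ L.lattice, DifferentiableAt ℂ f z)
    (h₀ : Tendsto (fun z ↦ z * f z) (𝓝[≠] 0) (𝓝 0))
    (h₁ : ∀ z ∉ L.lattice, ‖f (z + L.ω₁)‖ = ‖f z‖)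
    (h₂ : ∀ z ∉ L.lattice, ‖f (z + L.ω₂)‖ = ‖f z‖) : ∃ K, ∀ z ∉ L.lattice, f z = K := by
  have hper {ω : ℂ} (hω : ω ∈ L.lattice) := norm_add_lattice_of_generators L h₁ h₂ hω
  have hsing : ∀ c ∈ L.lattice, Tendsto (fun z ↦ (z - c) * f z) (𝓝[≠] c) (𝓝 0) := by
    intro c hc
    have hshift : Tendsto (fun z ↦ z - c) (𝓝[≠] c) (𝓝[≠] 0) := by
      refine tendsto_nhdsWithin_iff.mpr ⟨?_, ?_⟩
      · exact (Continuous.tendsto' (by fun_prop) c 0 (by simp)).mono_left nhdsWithin_le_nhds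
      · filter_upwards [self_mem_nhdsWithin] with z hz using sub_ne_zero.mpr hz
    rw [tendsto_zero_iff_norm_tendsto_zero] at h₀ ⊢
    refine (h₀.comp hshift).congr' ?_
    filter_upwards [eventually_notMem_lattice L c] with z hz
    have hzc : z - c ∉ L.lattice := by rwa [L.lattice.sub_mem_iff_left hc]
    simp only [comp_apply, norm_mul, ← hper hc _ hzc, sub_add_cancel]
  obtain ⟨g, hg, hgf⟩ := exists_differentiable_eqOn_compl (eventually_notMem_lattice L) hf hsing
  have hgper : ∀ ω ∈ L.lattice, ∀ z, ‖g (z + ω)‖ = ‖g z‖ := by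
    intro ω hω
    have hcont := hg.continuous
    refine congr_fun <| Continuous.ext_on (dense_compl_lattice L)
      (f := fun z ↦ ‖g (z + ω)‖) (g := fun z ↦ ‖g z‖) (by fun_prop) (by fun_prop) fun z hz ↦ ?_
    have hzω : z + ω ∉ L.lattice := by rwa [L.lattice.add_mem_iff_left hω]
    simp only [hgf hz, hgf hzω, hper hω z hz]
  obtain ⟨K, hK⟩ := exists_forall_eq_of_norm_add_lattice L hg hgper
  exact ⟨K, fun z hz ↦ (hgf hz).symm.trans (hK z)⟩

end Lattice

section ModularParameter

variable {τ : ℂ}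

/-- The lattice `ℤτ + ℤ`, which carries the poles of `μ(·, v; τ)`. -/
def tauLattice (τ : ℂ) : Submodule ℤ ℂ := Submodule.span ℤ {τ, 1}

/-- The periods `(τ, 1)` as a `PeriodPair`; its lattice is `tauLattice τ` by definition. -/
def tauPeriodPair (hτ : 0 < τ.im) : PeriodPair where
  ω₁ := τ
  ω₂ := 1
  indep := by
    refine LinearIndependent.pair_iff.mpr fun s t h ↦ ?_
    have hs : s = 0 := by simpa [hτ.ne'] using congr_arg Complex.im h
    simpa [hs] using h

theorem mem_tauLattice {z : ℂ} : z ∈ tauLattice τ ↔ ∃ m n : ℤ, z = m * τ + n := by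
  simp [tauLattice, Submodule.mem_span_pair, eq_comm]

theorem add_tau_mem_tauLattice {z : ℂ} : z + τ ∈ tauLattice τ ↔ z ∈ tauLattice τ :=
  Submodule.add_mem_iff_left _ (Submodule.subset_span (by simp))

theorem add_one_mem_tauLattice {z : ℂ} : z + 1 ∈ tauLattice τ ↔ z ∈ tauLattice τ :=
  Submodule.add_mem_iff_left _ (Submodule.subset_span (by simp))

theorem mem_tauLattice_of_exp_eq_one {s u : ℂ} (h₁ : cexp (s * I) = 1)
    (hτ : cexp (s * I * τ - 2 * π * I * u) = 1) : u ∈ tauLattice τ := by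
  obtain ⟨n, hn⟩ := Complex.exp_eq_one_iff.mp h₁
  obtain ⟨m, hm⟩ := Complex.exp_eq_one_iff.mp hτ
  refine mem_tauLattice.mpr ⟨n, -m, mul_left_cancel₀ Complex.two_pi_I_ne_zero ?_⟩
  push_cast
  linear_combination τ * hn - hm

theorem eq_zero_of_quasiperiodic (hτ : 0 < τ.im) {u : ℂ} (hu : u ∉ tauLattice τ) {f : ℂ → ℂ}
    (hf : ∀ z ∉ tauLattice τ, DifferentiableAt ℂ f z)
    (h₀ : Tendsto (fun z ↦ z * f z) (𝓝[≠] 0) (𝓝 0)) (h₁ : ∀ z ∉ tauLattice τ, f (z + 1) = f z)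
    (hτf : ∀ z ∉ tauLattice τ, f (z + τ) = cexp (-(2 * π * I * u)) * f z) :
    ∀ z ∉ tauLattice τ, f z = 0 := by
  -- A unitary character `z ↦ e^{isz}` with real `s` turns the multipliers into phases.
  set s : ℝ := 2 * π * u.im / τ.im
  set g : ℂ → ℂ := fun z ↦ cexp (s * I * z) * f z
  have hg₁ : ∀ z ∉ tauLattice τ, g (z + 1) = cexp (s * I) * g z := fun z hz ↦ by
    simp only [g, h₁ z hz, mul_add, mul_one, Complex.exp_add]
    ring
  have hgτ : ∀ z ∉ tauLattice τ, g (z + τ) = cexp (s * I * τ - 2 * π * I * u) * g z := by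
    intro z hz
    simp only [g, hτf z hz, mul_add, sub_eq_add_neg, Complex.exp_add]
    ring
  have hphase : ‖cexp (s * I * τ - 2 * π * I * u)‖ = 1 := by
    rw [Complex.norm_exp, Real.exp_eq_one_iff]
    simp [s, hτ.ne']
  obtain ⟨K, hK⟩ : ∃ K, ∀ z ∉ tauLattice τ, g z = K := by
    refine exists_forall_notMem_lattice_eq (tauPeriodPair hτ) (fun z hz ↦ ?_) ?_ ?_ ?_
    · exact DifferentiableAt.mul (by fun_prop) (hf z hz)
    · have hexp : Tendsto (fun z : ℂ ↦ cexp (s * I * z)) (𝓝[≠] 0) (𝓝 1) :=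
        (Continuous.tendsto' (by fun_prop) 0 1 (by simp)).mono_left nhdsWithin_le_nhds
      simpa [g, mul_left_comm] using hexp.mul h₀
    · intro z hz
      simp only [tauPeriodPair, hgτ z hz, norm_mul, hphase, one_mul]
    · intro z hz
      simp only [tauPeriodPair, hg₁ z hz, norm_mul, Complex.norm_exp_ofReal_mul_I, one_mul]
  have hK₁ : K = cexp (s * I) * K := by
    simpa [hK u hu, hK (u + 1) (add_one_mem_tauLattice.not.mpr hu)] using hg₁ u hu
  have hKτ : K = cexp (s * I * τ - 2 * π * I * u) * K := by
    simpa [hK u hu, hK (u + τ) (add_tau_mem_tauLattice.not.mpr hu)] using hgτ u hu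
  suffices K = 0 by
    intro z hz
    simpa [g, Complex.exp_ne_zero, this] using hK z hz
  by_contra hK₀
  exact hu (mem_tauLattice_of_exp_eq_one ((mul_eq_right₀ hK₀).mp hK₁.symm)
    ((mul_eq_right₀ hK₀).mp hKτ.symm))

end ModularParameter

section Theta

theorem neg_one_zpow_eq_cexp (n : ℤ) : (-1 : ℂ) ^ n = cexp (n * (π * I)) := by
  rw [Complex.exp_int_mul, Complex.exp_pi_mul_I]

theorem ne_zero_of_im_pos {τ : ℂ} (hτ : 0 < τ.im) : τ ≠ 0 := by
  rintro rfl
  simp at hτ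

theorem jtheta_eq_cexp_mul_jacobiTheta₂ (v τ : ℂ) :
    jtheta v τ = cexp (π * I * v + π * I * τ / 4) * jacobiTheta₂ (v + τ / 2 + 1 / 2) τ := by
  rw [jtheta, jacobiTheta₂, ← tsum_mul_left]
  refine tsum_congr fun n ↦ ?_
  rw [neg_one_zpow_eq_cexp, jacobiTheta₂_term, ← Complex.exp_add, ← Complex.exp_add,
    ← Complex.exp_add]
  ring_nf

theorem jacobiTheta₂_eq_cexp_mul_jtheta (v τ : ℂ) :
    jacobiTheta₂ (v + τ / 2 + 1 / 2) τ = cexp (-(π * I * v + π * I * τ / 4)) * jtheta v τ := by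
  rw [jtheta_eq_cexp_mul_jacobiTheta₂, ← mul_assoc, ← Complex.exp_add, neg_add_cancel,
    Complex.exp_zero, one_mul]

theorem jtheta_add_one (v τ : ℂ) : jtheta (v + 1) τ = -jtheta v τ := by
  rw [jtheta_eq_cexp_mul_jacobiTheta₂, jtheta_eq_cexp_mul_jacobiTheta₂,
    show v + 1 + τ / 2 + 1 / 2 = v + τ / 2 + 1 / 2 + 1 by ring, jacobiTheta₂_add_left,
    show π * I * (v + 1) + π * I * τ / 4 = π * I * v + π * I * τ / 4 + π * I by ring,
    Complex.exp_add_pi_mul_I, neg_mul]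

theorem jtheta_add_tau (v τ : ℂ) :
    jtheta (v + τ) τ = -cexp (-(2 * π * I * v) - π * I * τ) * jtheta v τ := by
  rw [jtheta_eq_cexp_mul_jacobiTheta₂, jtheta_eq_cexp_mul_jacobiTheta₂,
    show v + τ + τ / 2 + 1 / 2 = v + τ / 2 + 1 / 2 + τ by ring, jacobiTheta₂_add_left',
    ← Complex.exp_sub_pi_mul_I, ← mul_assoc, ← mul_assoc, ← Complex.exp_add, ← Complex.exp_add]
  ring_nf

theorem jtheta_neg (v τ : ℂ) : jtheta (-v) τ = -jtheta v τ := by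
  rw [jtheta_eq_cexp_mul_jacobiTheta₂, jtheta_eq_cexp_mul_jacobiTheta₂,
    show -v + τ / 2 + 1 / 2 = -(v + τ / 2 + 1 / 2) + 1 + τ by ring, jacobiTheta₂_add_left',
    jacobiTheta₂_add_left, jacobiTheta₂_neg_left, ← neg_mul, ← Complex.exp_sub_pi_mul_I,
    ← mul_assoc, ← Complex.exp_add]
  ring_nf

theorem jtheta_zero (τ : ℂ) : jtheta 0 τ = 0 :=
  CharZero.eq_neg_self_iff.mp (by simpa using jtheta_neg 0 τ)

theorem differentiable_jtheta {τ : ℂ} (hτ : 0 < τ.im) : Differentiable ℂ (jtheta · τ) := by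
  simp_rw [jtheta_eq_cexp_mul_jacobiTheta₂]
  have hθ : Differentiable ℂ (jacobiTheta₂ · τ) := fun z ↦ differentiableAt_jacobiTheta₂_fst z hτ
  exact Differentiable.mul (by fun_prop)
    (hθ.comp (f := fun v ↦ v + τ / 2 + 1 / 2) (by fun_prop))

theorem nome_add_one (τ : ℂ) : nome (τ + 1) = nome τ := by
  rw [nome, nome, mul_add, mul_one, Complex.exp_periodic]

theorem jtheta_modulus_add_one (v τ : ℂ) :
    jtheta v (τ + 1) = cexp (π * I / 4) * jtheta v τ := by
  rw [jtheta, jtheta, ← tsum_mul_left]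
  refine tsum_congr fun n ↦ ?_
  obtain ⟨k, hk⟩ := Int.even_mul_succ_self n
  have hkc : (n : ℂ) * (n + 1) = k + k := mod_cast hk
  rw [mul_left_comm]
  congr 1
  rw [← Complex.exp_add, Complex.exp_eq_exp_iff_exists_int]
  exact ⟨k, by linear_combination (π * I) * hkc⟩

end Theta

section AppellSum

variable {τ : ℂ}

/-- The denominator `1 − e^{2πiu} qⁿ` of the `n`-th term of the sum defining `μ(u, v; τ)`. -/
def appellDenom (n : ℤ) (u τ : ℂ) : ℂ := 1 - cexp (2 * π * I * (u + n * τ))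

theorem one_sub_exp_neg_le_norm_one_sub_cexp {r : ℝ} {w : ℂ} (hr : r ≤ |w.re|) :
    1 - Real.exp (-r) ≤ ‖1 - cexp w‖ := by
  have hnorm : |1 - Real.exp w.re| ≤ ‖1 - cexp w‖ := by
    simpa [Complex.norm_exp] using abs_norm_sub_norm_le 1 (cexp w)
  refine le_trans ?_ hnorm
  rcases le_abs.mp hr with h | h
  · have hcosh := Real.one_le_cosh r
    have hexp := Real.exp_le_exp.mpr h
    rw [Real.cosh_eq] at hcosh
    linarith [neg_le_abs (1 - Real.exp w.re)]
  · have hexp := Real.exp_le_exp.mpr (le_neg.mpr h)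
    linarith [le_abs_self (1 - Real.exp w.re)]

theorem appellDenom_eq_zero_iff {n : ℤ} {u : ℂ} :
    appellDenom n u τ = 0 ↔ ∃ k : ℤ, u = (-n : ℤ) * τ + k := by
  rw [appellDenom, sub_eq_zero, eq_comm, Complex.exp_eq_one_iff]
  refine exists_congr fun k ↦ ?_
  rw [mul_comm (k : ℂ), mul_right_inj' Complex.two_pi_I_ne_zero]
  push_cast
  constructor <;> intro h <;> linear_combination h

theorem appellDenom_ne_zero {u : ℂ} (hu : u ∉ tauLattice τ) (n : ℤ) : appellDenom n u τ ≠ 0 :=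
  fun h ↦ hu (mem_tauLattice.mpr ⟨-n, appellDenom_eq_zero_iff.mp h⟩)

@[fun_prop]
theorem differentiable_appellDenom (n : ℤ) (τ : ℂ) : Differentiable ℂ (appellDenom n · τ) := by
  unfold appellDenom
  fun_prop

/-- The strip around `-mτ + ℝ` in which only the `m`-th denominator can vanish. -/
def appellStrip (m : ℤ) (τ : ℂ) : Set ℂ := {u | |u.im + m * τ.im| < 3 / 4 * τ.im}

theorem isOpen_appellStrip (m : ℤ) (τ : ℂ) : IsOpen (appellStrip m τ) :=
  isOpen_lt (by fun_prop) (by fun_prop)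

theorem exists_mem_appellStrip (hτ : 0 < τ.im) (u : ℂ) : ∃ m, u ∈ appellStrip m τ := by
  refine ⟨-round (u.im / τ.im), ?_⟩
  calc |u.im + (-round (u.im / τ.im) : ℤ) * τ.im|
      = |u.im / τ.im - round (u.im / τ.im)| * τ.im := by
        rw [← abs_of_pos hτ, ← abs_mul, abs_of_pos hτ]
        congr 1
        push_cast
        field_simp
        ring
    _ ≤ 1 / 2 * τ.im := by gcongr; exact abs_sub_round _
    _ < 3 / 4 * τ.im := by linarith

theorem one_sub_exp_le_norm_appellDenom (hτ : 0 < τ.im) {m n : ℤ} (hmn : n ≠ m) {u : ℂ}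
    (hu : u ∈ appellStrip m τ) : 1 - Real.exp (-(π / 2 * τ.im)) ≤ ‖appellDenom n u τ‖ := by
  apply one_sub_exp_neg_le_norm_one_sub_cexp
  have hgap : (1 : ℝ) ≤ |(n : ℝ) - m| := mod_cast Int.one_le_abs (sub_ne_zero.mpr hmn)
  have hdist : 1 / 4 * τ.im ≤ |u.im + n * τ.im| := by
    have h := abs_sub_abs_le_abs_sub ((n - m : ℝ) * τ.im) (-(u.im + m * τ.im))
    rw [abs_mul, abs_of_pos hτ, abs_neg,
      show (n - m : ℝ) * τ.im - -(u.im + m * τ.im) = u.im + n * τ.im by ring] at h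
    have hu : |u.im + m * τ.im| < 3 / 4 * τ.im := hu
    nlinarith
  have hre : (2 * π * I * (u + n * τ)).re = -(2 * π * (u.im + n * τ.im)) := by simp
  rw [hre, abs_neg, abs_mul, abs_of_pos Real.two_pi_pos]
  nlinarith [Real.pi_pos]

theorem one_sub_exp_neg_half_pi_mul_im_pos (hτ : 0 < τ.im) :
    0 < 1 - Real.exp (-(π / 2 * τ.im)) :=
  sub_pos.mpr (Real.exp_lt_one_iff.mpr (neg_lt_zero.mpr (by positivity)))

theorem exists_forall_norm_inv_appellDenom_le (hτ : 0 < τ.im) (u : ℂ) :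
    ∃ C, ∀ n : ℤ, ‖(appellDenom n u τ)⁻¹‖ ≤ C := by
  obtain ⟨m, hm⟩ := exists_mem_appellStrip hτ u
  refine ⟨max ‖(appellDenom m u τ)⁻¹‖ (1 - Real.exp (-(π / 2 * τ.im)))⁻¹, fun n ↦ ?_⟩
  rcases eq_or_ne n m with rfl | hnm
  · exact le_max_left _ _
  · refine le_max_of_le_right ?_
    rw [norm_inv]
    exact inv_anti₀ (one_sub_exp_neg_half_pi_mul_im_pos hτ)
      (one_sub_exp_le_norm_appellDenom hτ hnm hm)

theorem summable_div_appellDenom (hτ : 0 < τ.im) {w : ℤ → ℂ} (hw : Summable w) (u : ℂ) :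
    Summable fun n ↦ w n / appellDenom n u τ := by
  obtain ⟨C, hC⟩ := exists_forall_norm_inv_appellDenom_le hτ u
  refine Summable.of_norm_bounded (hw.norm.mul_right C) fun n ↦ ?_
  rw [div_eq_mul_inv, norm_mul]
  exact mul_le_mul_of_nonneg_left (hC n) (norm_nonneg _)

theorem differentiableOn_tsum_div_appellDenom (hτ : 0 < τ.im) {w : ℤ → ℂ} (hw : Summable w)
    {m : ℤ} (hm : w m = 0) :
    DifferentiableOn ℂ (fun u ↦ ∑' n, w n / appellDenom n u τ) (appellStrip m τ) := by
  have hδ := one_sub_exp_neg_half_pi_mul_im_pos hτ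
  refine differentiableOn_tsum_of_summable_norm
    (hw.norm.div_const (1 - Real.exp (-(π / 2 * τ.im)))) (fun n u hu ↦ ?_)
    (isOpen_appellStrip m τ) fun n u hu ↦ ?_
  all_goals rcases eq_or_ne n m with rfl | hnm
  · simp [hm, differentiableWithinAt_const]
  · have hden : appellDenom n u τ ≠ 0 :=
      norm_pos_iff.mp (hδ.trans_le (one_sub_exp_le_norm_appellDenom hτ hnm hu))
    exact DifferentiableAt.differentiableWithinAt (by fun_prop (disch := assumption))
  · simp [hm]
  · rw [norm_div]
    gcongr
    exact one_sub_exp_le_norm_appellDenom hτ hnm hu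

theorem differentiable_tsum_mul_jacobiTheta₂_term (hτ : 0 < τ.im) {c : ℤ → ℂ} {C : ℝ}
    (hc : ∀ n, ‖c n‖ ≤ C) :
    Differentiable ℂ fun z ↦ ∑' n, c n * jacobiTheta₂_term n z τ := by
  intro z₀
  have hsum := (summable_pow_mul_jacobiTheta₂_term_bound (|z₀.im| + 1) hτ 0).mul_left C
  have hopen : IsOpen {z : ℂ | |z.im| < |z₀.im| + 1} := isOpen_lt (by fun_prop) (by fun_prop)
  refine (differentiableOn_tsum_of_summable_norm hsum (fun n ↦ ?_) hopen fun n z hz ↦ ?_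
    ).differentiableAt (hopen.mem_nhds (lt_add_one |z₀.im|))
  · unfold jacobiTheta₂_term
    fun_prop
  · rw [norm_mul, pow_zero, one_mul]
    exact mul_le_mul (hc n) (norm_jacobiTheta₂_term_le hτ (le_of_lt hz) le_rfl n)
      (norm_nonneg _) ((norm_nonneg _).trans (hc n))

/-- The sum `Σₙ e^{πin²τ + 2πinz} / (1 − e^{2πiu} qⁿ)`; at `z = v + τ/2 + 1/2` it is the one
defining `μ(u, v; τ)`. -/
def appellSum (u z τ : ℂ) : ℂ := ∑' n : ℤ, jacobiTheta₂_term n z τ / appellDenom n u τ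

theorem appellSum_add_one_left (u z τ : ℂ) : appellSum (u + 1) z τ = appellSum u z τ := by
  refine tsum_congr fun n ↦ ?_
  rw [appellDenom, appellDenom, add_right_comm, mul_add _ _ (1 : ℂ), mul_one,
    Complex.exp_periodic]

theorem appellSum_add_one_right (u z τ : ℂ) : appellSum u (z + 1) τ = appellSum u z τ := by
  refine tsum_congr fun n ↦ ?_
  congr 1
  rw [jacobiTheta₂_term, jacobiTheta₂_term, Complex.exp_eq_exp_iff_exists_int]
  exact ⟨n, by ring⟩

theorem appellSum_add_tau_right (hτ : 0 < τ.im) {u : ℂ} (hu : u ∉ tauLattice τ) (z : ℂ) :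
    appellSum u (z + τ) τ = cexp (-(2 * π * I * u)) * (appellSum u z τ - jacobiTheta₂ z τ) := by
  have hθ := (summable_jacobiTheta₂_term_iff z τ).mpr hτ
  rw [appellSum, appellSum, jacobiTheta₂, ← (summable_div_appellDenom hτ hθ u).tsum_sub hθ,
    ← tsum_mul_left]
  refine tsum_congr fun n ↦ ?_
  have hden := appellDenom_ne_zero hu n
  have hterm : jacobiTheta₂_term n (z + τ) τ =
      cexp (-(2 * π * I * u)) * (jacobiTheta₂_term n z τ * (1 - appellDenom n u τ)) := by
    rw [jacobiTheta₂_term, jacobiTheta₂_term, appellDenom, sub_sub_cancel, ← Complex.exp_add,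
      ← Complex.exp_add]
    ring_nf
  rw [hterm]
  field_simp

theorem appellSum_add_tau_left (hτ : 0 < τ.im) {u : ℂ} (hu : u ∉ tauLattice τ) (z : ℂ) :
    appellSum (u + τ) z τ =
      cexp (2 * π * I * (u - z) + π * I * τ) * appellSum u z τ + jacobiTheta₂ z τ := by
  have hθ := (summable_jacobiTheta₂_term_iff z τ).mpr hτ
  have hθ' : Summable fun n ↦ jacobiTheta₂_term (Equiv.subRight (1 : ℤ) n) z τ :=
    (Equiv.subRight (1 : ℤ)).summable_iff.mpr hθ
  rw [appellSum, appellSum, jacobiTheta₂, ← (Equiv.subRight (1 : ℤ)).tsum_eq,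
    ← (Equiv.subRight (1 : ℤ)).tsum_eq (jacobiTheta₂_term · z τ), ← tsum_mul_left,
    ← ((summable_div_appellDenom hτ hθ u).mul_left _).tsum_add hθ']
  refine tsum_congr fun n ↦ ?_
  have hden := appellDenom_ne_zero hu n
  have hshift : appellDenom (n - 1) (u + τ) τ = appellDenom n u τ := by
    rw [appellDenom, appellDenom]
    push_cast
    ring_nf
  have hterm : cexp (2 * π * I * (u - z) + π * I * τ) * jacobiTheta₂_term n z τ =
      jacobiTheta₂_term (n - 1) z τ * (1 - appellDenom n u τ) := by
    rw [jacobiTheta₂_term, jacobiTheta₂_term, appellDenom, sub_sub_cancel, ← Complex.exp_add,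
      ← Complex.exp_add]
    push_cast
    ring_nf
  rw [← mul_div_assoc, hterm, Equiv.subRight_apply, hshift]
  field_simp
  ring

theorem differentiable_appellSum_right (hτ : 0 < τ.im) (u : ℂ) :
    Differentiable ℂ (appellSum u · τ) := by
  obtain ⟨C, hC⟩ := exists_forall_norm_inv_appellDenom_le hτ u
  simpa only [appellSum, div_eq_inv_mul] using differentiable_tsum_mul_jacobiTheta₂_term hτ hC

theorem appellSum_eq_div_add (hτ : 0 < τ.im) (u z : ℂ) (m : ℤ) :
    appellSum u z τ = jacobiTheta₂_term m z τ / appellDenom m u τ +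
      ∑' n, update (jacobiTheta₂_term · z τ) m 0 n / appellDenom n u τ := by
  have hθ := (summable_jacobiTheta₂_term_iff z τ).mpr hτ
  rw [appellSum, (summable_div_appellDenom hτ hθ u).tsum_eq_add_tsum_ite m]
  congr 2 with n
  rcases eq_or_ne n m with rfl | hnm <;> simp [*]

theorem summable_update_jacobiTheta₂_term (hτ : 0 < τ.im) (z : ℂ) (m : ℤ) :
    Summable (update (jacobiTheta₂_term · z τ) m 0) :=
  ((summable_jacobiTheta₂_term_iff z τ).mpr hτ).update m 0

theorem differentiableAt_appellSum_left (hτ : 0 < τ.im) {u : ℂ} (hu : u ∉ tauLattice τ) (z : ℂ) :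
    DifferentiableAt ℂ (appellSum · z τ) u := by
  obtain ⟨m, hm⟩ := exists_mem_appellStrip hτ u
  have hden := appellDenom_ne_zero hu m
  have hreg := (differentiableOn_tsum_div_appellDenom hτ
    (summable_update_jacobiTheta₂_term hτ z m) (update_self m 0 _)).differentiableAt
      ((isOpen_appellStrip m τ).mem_nhds hm)
  simp_rw [appellSum_eq_div_add hτ _ z m]
  fun_prop (disch := assumption)

theorem tendsto_div_appellDenom_zero (τ : ℂ) :
    Tendsto (fun u ↦ u / appellDenom 0 u τ) (𝓝[≠] 0) (𝓝 (-(2 * π * I))⁻¹) := by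
  have hderiv : HasDerivAt (appellDenom 0 · τ) (-(2 * π * I)) 0 := by
    unfold appellDenom
    simpa using
      (((hasDerivAt_id (0 : ℂ)).add_const ((0 : ℤ) * τ)).const_mul (2 * π * I)).cexp.const_sub 1
  refine (hderiv.tendsto_slope.inv₀ (by simp [Real.pi_ne_zero])).congr fun u ↦ ?_
  simp [slope_def_field, appellDenom]

theorem tendsto_mul_appellSum (hτ : 0 < τ.im) (z : ℂ) :
    Tendsto (fun u ↦ u * appellSum u z τ) (𝓝[≠] 0) (𝓝 (-(2 * π * I))⁻¹) := by
  have hstrip : appellStrip 0 τ ∈ 𝓝 0 :=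
    (isOpen_appellStrip 0 τ).mem_nhds (by simpa [appellStrip] using hτ)
  have hreg := (differentiableOn_tsum_div_appellDenom hτ
    (summable_update_jacobiTheta₂_term hτ z 0) (update_self 0 0 _)).continuousOn.continuousAt
      hstrip
  have hzero : Tendsto (fun u : ℂ ↦ u * ∑' n, update (jacobiTheta₂_term · z τ) 0 0 n /
      appellDenom n u τ) (𝓝[≠] 0) (𝓝 0) := by
    simpa using (continuousAt_id.fun_mul hreg).tendsto.mono_left nhdsWithin_le_nhds
  have hsum := (tendsto_div_appellDenom_zero τ).add hzero
  rw [add_zero] at hsum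
  refine hsum.congr fun u ↦ ?_
  rw [appellSum_eq_div_add hτ u z 0, mul_add, jacobiTheta₂_term]
  simp [div_eq_mul_inv]

end AppellSum

section AppellLerch

variable {τ : ℂ}

/-- The numerator of `μ(u, v; τ)`: the Appell–Lerch sum with its factor `e^{πiu}` but without
the denominator `θ(v; τ)`. -/
def appellLerch (u v τ : ℂ) : ℂ := cexp (π * I * u) * appellSum u (v + τ / 2 + 1 / 2) τ

theorem mu_eq_appellLerch_div_jtheta (u v τ : ℂ) :
    mu u v τ = appellLerch u v τ / jtheta v τ := by
  rw [mu, appellLerch, appellSum, div_mul_eq_mul_div]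
  congr 2
  refine tsum_congr fun n ↦ ?_
  obtain ⟨k, hk⟩ := Int.even_mul_succ_self n
  have hkc : (n : ℂ) * (n + 1) = k + k := mod_cast hk
  congr 1
  · rw [show n * (n + 1) / 2 = k by lia, neg_eq_neg_one_mul, mul_zpow, neg_one_zpow_eq_cexp,
      nome, ← Complex.exp_int_mul, ← Complex.exp_int_mul, jacobiTheta₂_term, ← Complex.exp_add,
      ← Complex.exp_add]
    congr 1
    linear_combination (-π * I * τ) * hkc
  · rw [appellDenom, nome, ← Complex.exp_int_mul, ← Complex.exp_add]
    ring_nf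

theorem appellLerch_add_one_left (u v τ : ℂ) : appellLerch (u + 1) v τ = -appellLerch u v τ := by
  rw [appellLerch, appellLerch, appellSum_add_one_left, mul_add, mul_one,
    Complex.exp_add_pi_mul_I, neg_mul]

theorem appellLerch_add_one_right (u v τ : ℂ) : appellLerch u (v + 1) τ = appellLerch u v τ := by
  rw [appellLerch, appellLerch, show v + 1 + τ / 2 + 1 / 2 = v + τ / 2 + 1 / 2 + 1 by ring,
    appellSum_add_one_right]

theorem appellLerch_add_tau_right (hτ : 0 < τ.im) {u : ℂ} (hu : u ∉ tauLattice τ) (v : ℂ) :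
    appellLerch u (v + τ) τ = cexp (-(2 * π * I * u)) *
      (appellLerch u v τ - cexp (π * I * (u - v) - π * I * τ / 4) * jtheta v τ) := by
  have hexp : cexp (π * I * u) * cexp (-(π * I * v + π * I * τ / 4)) =
      cexp (π * I * (u - v) - π * I * τ / 4) := by
    rw [← Complex.exp_add]
    ring_nf
  rw [appellLerch, appellLerch, show v + τ + τ / 2 + 1 / 2 = v + τ / 2 + 1 / 2 + τ by ring,
    appellSum_add_tau_right hτ hu, jacobiTheta₂_eq_cexp_mul_jtheta]
  linear_combination -(cexp (-(2 * π * I * u)) * jtheta v τ) * hexp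

theorem appellLerch_add_tau_left (hτ : 0 < τ.im) {u : ℂ} (hu : u ∉ tauLattice τ) (v : ℂ) :
    appellLerch (u + τ) v τ =
      -cexp (2 * π * I * (u - v) + π * I * τ) * appellLerch u v τ +
        cexp (π * I * (u - v) + 3 * π * I * τ / 4) * jtheta v τ := by
  have hexp₁ : cexp (π * I * (u + τ)) *
      cexp (2 * π * I * (u - (v + τ / 2 + 1 / 2)) + π * I * τ) =
        -cexp (2 * π * I * (u - v) + π * I * τ) * cexp (π * I * u) := by
    rw [← Complex.exp_sub_pi_mul_I, ← Complex.exp_add, ← Complex.exp_add]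
    ring_nf
  have hexp₂ : cexp (π * I * (u + τ)) * cexp (-(π * I * v + π * I * τ / 4)) =
      cexp (π * I * (u - v) + 3 * π * I * τ / 4) := by
    rw [← Complex.exp_add]
    ring_nf
  rw [appellLerch, appellLerch, appellSum_add_tau_left hτ hu, jacobiTheta₂_eq_cexp_mul_jtheta]
  linear_combination appellSum u (v + τ / 2 + 1 / 2) τ * hexp₁ + jtheta v τ * hexp₂

theorem differentiable_appellLerch_right (hτ : 0 < τ.im) (u : ℂ) :
    Differentiable ℂ (appellLerch u · τ) := by
  unfold appellLerch
  exact ((differentiable_appellSum_right hτ u).comp (f := fun v ↦ v + τ / 2 + 1 / 2)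
    (by fun_prop)).const_mul _

theorem differentiableAt_appellLerch_left (hτ : 0 < τ.im) {u : ℂ} (hu : u ∉ tauLattice τ)
    (v : ℂ) : DifferentiableAt ℂ (appellLerch · v τ) u := by
  unfold appellLerch
  exact DifferentiableAt.mul (by fun_prop) (differentiableAt_appellSum_left hτ hu _)

theorem tendsto_mul_appellLerch (hτ : 0 < τ.im) (v : ℂ) :
    Tendsto (fun u ↦ u * appellLerch u v τ) (𝓝[≠] 0) (𝓝 (-(2 * π * I))⁻¹) := by
  have hexp : Tendsto (fun u : ℂ ↦ cexp (π * I * u)) (𝓝[≠] 0) (𝓝 1) :=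
    (Continuous.tendsto' (by fun_prop) 0 1 (by simp)).mono_left nhdsWithin_le_nhds
  simpa [appellLerch, mul_left_comm] using
    hexp.mul (tendsto_mul_appellSum hτ (v + τ / 2 + 1 / 2))

theorem eventually_appellLerch_ne_zero (hτ : 0 < τ.im) (v : ℂ) :
    ∀ᶠ u in 𝓝[≠] 0, appellLerch u v τ ≠ 0 := by
  have hres : (-(2 * π * I : ℂ))⁻¹ ≠ 0 := by simp [Real.pi_ne_zero]
  filter_upwards [(tendsto_mul_appellLerch hτ v).eventually_ne hres] with u hu
  exact right_ne_zero_of_mul hu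

/-- Both sides are, as functions of `v`, quasi-periodic with multiplier `e^{-2πiu} ≠ 1`. -/
theorem appellLerch_mul_jtheta_comm (hτ : 0 < τ.im) {u v : ℂ} (hu : u ∉ tauLattice τ)
    (hv : v ∉ tauLattice τ) :
    appellLerch u v τ * jtheta u τ = appellLerch v u τ * jtheta v τ := by
  have hA := differentiable_appellLerch_right hτ u
  have hθ := differentiable_jtheta hτ
  refine sub_eq_zero.mp (eq_zero_of_quasiperiodic hτ hu
    (f := fun v ↦ appellLerch u v τ * jtheta u τ - appellLerch v u τ * jtheta v τ)
    (fun w hw ↦ ?_) ?_ (fun w _ ↦ ?_) (fun w hw ↦ ?_) v hv)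
  · exact ((hA w).mul_const _).fun_sub ((differentiableAt_appellLerch_left hτ hw u).mul (hθ w))
  · have hleft : Tendsto (fun w ↦ w * appellLerch u w τ * jtheta u τ) (𝓝[≠] 0) (𝓝 0) := by
      refine (Continuous.tendsto' ?_ 0 0 (by simp)).mono_left nhdsWithin_le_nhds
      have := hA.continuous
      fun_prop
    have hθ₀ : Tendsto (jtheta · τ) (𝓝[≠] 0) (𝓝 0) :=
      (hθ.continuous.tendsto' 0 0 (jtheta_zero τ)).mono_left nhdsWithin_le_nhds
    simpa [mul_sub, mul_assoc] using hleft.sub ((tendsto_mul_appellLerch hτ u).mul hθ₀)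
  · rw [appellLerch_add_one_right, appellLerch_add_one_left, jtheta_add_one, neg_mul_neg]
  · have hexp₁ : cexp (2 * π * I * (w - u) + π * I * τ) * cexp (-(2 * π * I * w) - π * I * τ) =
        cexp (-(2 * π * I * u)) := by
      rw [← Complex.exp_add]
      ring_nf
    have hexp₂ : cexp (π * I * (w - u) + 3 * π * I * τ / 4) *
        cexp (-(2 * π * I * w) - π * I * τ) =
          cexp (-(2 * π * I * u)) * cexp (π * I * (u - w) - π * I * τ / 4) := by
      rw [← Complex.exp_add, ← Complex.exp_add]
      ring_nf
    rw [appellLerch_add_tau_right hτ hu, appellLerch_add_tau_left hτ hw, jtheta_add_tau]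
    linear_combination (-appellLerch w u τ * jtheta w τ) * hexp₁ +
      (jtheta u τ * jtheta w τ) * hexp₂

theorem exists_jtheta_ne_zero (hτ : 0 < τ.im) : ∃ v, jtheta v τ ≠ 0 := by
  by_contra! hθ
  obtain ⟨v, hv⟩ := (dense_compl_lattice (tauPeriodPair hτ)).nonempty
  have hzero : ∀ u ∉ tauLattice τ, appellLerch u v τ = 0 := fun u hu ↦
    eq_zero_of_quasiperiodic hτ hu (fun w _ ↦ differentiable_appellLerch_right hτ u w)
      ((((continuous_id.fun_mul (differentiable_appellLerch_right hτ u).continuous).tendsto' 0 0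
        (by simp)).mono_left nhdsWithin_le_nhds))
      (fun w _ ↦ appellLerch_add_one_right u w τ)
      (fun w _ ↦ by rw [appellLerch_add_tau_right hτ hu, hθ, mul_zero, sub_zero]) v hv
  obtain ⟨u, hu, hne⟩ := ((eventually_notMem_lattice (tauPeriodPair hτ) 0).and
    (eventually_appellLerch_ne_zero hτ v)).exists
  exact hne (hzero u hu)

theorem jtheta_ne_zero (hτ : 0 < τ.im) {v : ℂ} (hv : v ∉ tauLattice τ) : jtheta v τ ≠ 0 := by
  intro hθv
  have hnear : ∀ᶠ u in 𝓝[≠] 0, jtheta u τ = 0 := by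
    filter_upwards [eventually_notMem_lattice (tauPeriodPair hτ) 0,
      eventually_appellLerch_ne_zero hτ v] with u hu hne
    have hcomm := appellLerch_mul_jtheta_comm hτ hu hv
    rw [hθv, mul_zero] at hcomm
    exact (mul_eq_zero.mp hcomm).resolve_left hne
  obtain ⟨w, hw⟩ := exists_jtheta_ne_zero hτ
  have hanalytic : AnalyticOnNhd ℂ (jtheta · τ) univ := fun u _ ↦
    (differentiable_jtheta hτ).analyticAt u
  exact hw (hanalytic.eqOn_zero_of_preconnected_of_frequently_eq_zero isPreconnected_univ
    (mem_univ 0) hnear.frequently (mem_univ w))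

end AppellLerch

section Mu

variable {τ : ℂ}

theorem mu_comm (hτ : 0 < τ.im) {u v : ℂ} (hu : u ∉ tauLattice τ) (hv : v ∉ tauLattice τ) :
    mu u v τ = mu v u τ := by
  rw [mu_eq_appellLerch_div_jtheta, mu_eq_appellLerch_div_jtheta,
    div_eq_div_iff (jtheta_ne_zero hτ hv) (jtheta_ne_zero hτ hu)]
  exact appellLerch_mul_jtheta_comm hτ hu hv

theorem mu_add_one (u v τ : ℂ) : mu (u + 1) v τ = -mu u v τ := by
  rw [mu_eq_appellLerch_div_jtheta, mu_eq_appellLerch_div_jtheta, appellLerch_add_one_left,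
    neg_div]

theorem mu_add_tau (hτ : 0 < τ.im) {u v : ℂ} (hu : u ∉ tauLattice τ) (hv : v ∉ tauLattice τ) :
    mu (u + τ) v τ = -cexp (2 * π * I * (u - v) + π * I * τ) * mu u v τ +
      cexp (π * I * (u - v) + 3 * π * I * τ / 4) := by
  have hθ := jtheta_ne_zero hτ hv
  rw [mu_eq_appellLerch_div_jtheta, mu_eq_appellLerch_div_jtheta, appellLerch_add_tau_left hτ hu]
  field_simp

theorem mu_modulus_add_one (u v τ : ℂ) : mu u v (τ + 1) = cexp (-(π * I) / 4) * mu u v τ := by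
  rw [mu, mu, nome_add_one, jtheta_modulus_add_one, neg_div, Complex.exp_neg]
  field_simp

theorem differentiableAt_mu_left (hτ : 0 < τ.im) {u : ℂ} (hu : u ∉ tauLattice τ) (v : ℂ) :
    DifferentiableAt ℂ (mu · v τ) u := by
  simp_rw [mu_eq_appellLerch_div_jtheta]
  exact (differentiableAt_appellLerch_left hτ hu v).div_const _

theorem tendsto_mul_mu (hτ : 0 < τ.im) (v : ℂ) :
    Tendsto (fun u ↦ u * mu u v τ) (𝓝[≠] 0) (𝓝 ((-(2 * π * I))⁻¹ / jtheta v τ)) := by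
  simpa only [mu_eq_appellLerch_div_jtheta, mul_div_assoc] using
    (tendsto_mul_appellLerch hτ v).div_const (jtheta v τ)

end Mu

section Laplace

theorem abs_mul_exp_mul_le {t r : ℝ} (h : |t| + 1 ≤ r) (x : ℝ) :
    |x| * Real.exp (t * x) ≤ Real.exp (r * x) + Real.exp (-(r * x)) := by
  have hr : 0 ≤ r := by linarith [abs_nonneg t]
  calc |x| * Real.exp (t * x)
      ≤ Real.exp |x| * Real.exp (|t| * |x|) := by
        have hx : |x| ≤ Real.exp |x| := by linarith [Real.add_one_le_exp |x|]
        have htx : t * x ≤ |t| * |x| := (le_abs_self _).trans_eq (abs_mul t x)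
        exact mul_le_mul hx (Real.exp_le_exp.mpr htx) (Real.exp_pos _).le (Real.exp_pos _).le
    _ = Real.exp ((|t| + 1) * |x|) := by rw [← Real.exp_add]; ring_nf
    _ ≤ Real.exp |r * x| := by
        rw [abs_mul, abs_of_nonneg hr]
        gcongr
    _ ≤ Real.exp (r * x) + Real.exp (-(r * x)) := Real.exp_abs_le _

theorem differentiable_integral_mul_cexp {μ : Measure ℝ} {w : ℝ → ℂ}
    (hw : ∀ s : ℝ, Integrable (fun x : ℝ ↦ w x * cexp (s * x)) μ) :
    Differentiable ℂ fun z ↦ ∫ x : ℝ, w x * cexp (z * x) ∂μ := by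
  intro z₀
  set r : ℝ := |z₀.re| + 2
  have hmeas : AEStronglyMeasurable w μ := by simpa using (hw 0).aestronglyMeasurable
  have hmul {g : ℝ → ℂ} (hg : Continuous g) : AEStronglyMeasurable (fun x ↦ w x * g x) μ :=
    hmeas.mul hg.aestronglyMeasurable
  have hnorm (s : ℝ) : Integrable (fun x ↦ ‖w x‖ * Real.exp (s * x)) μ := by
    simpa [Complex.norm_exp] using (hw s).norm
  have hint : Integrable (fun x : ℝ ↦ w x * cexp (z₀ * x)) μ :=
    (hnorm z₀.re).mono (hmul (by fun_prop)) (by simp [Complex.norm_exp])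
  have hbound (x : ℝ) (z : ℂ) (hz : z ∈ Metric.ball z₀ 1) :
      ‖w x * (cexp (z * x) * x)‖ ≤ ‖w x‖ * Real.exp (r * x) + ‖w x‖ * Real.exp (-r * x) := by
    have hre : |z.re| + 1 ≤ r := by
      have h₁ : |z.re - z₀.re| < 1 :=
        (Complex.abs_re_le_norm (z - z₀)).trans_lt (mem_ball_iff_norm.mp hz)
      have h₂ := abs_sub_abs_le_abs_sub z.re z₀.re
      simp only [r]
      linarith
    have hexp : ‖cexp (z * x) * x‖ = |x| * Real.exp (z.re * x) := by
      simp [Complex.norm_exp, mul_comm]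
    rw [norm_mul, hexp, ← mul_add, neg_mul]
    gcongr
    exact abs_mul_exp_mul_le hre x
  have hderiv (x : ℝ) (z : ℂ) :
      HasDerivAt (fun z ↦ w x * cexp (z * x)) (w x * (cexp (z * x) * x)) z := by
    simpa using ((hasDerivAt_mul_const (x : ℂ)).cexp.const_mul (w x) : HasDerivAt _ _ z)
  exact (hasDerivAt_integral_of_dominated_loc_of_deriv_le (Metric.ball_mem_nhds z₀ one_pos)
    (.of_forall fun z ↦ hmul (by fun_prop)) hint (hmul (by fun_prop))
    (.of_forall hbound) ((hnorm r).add (hnorm (-r)))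
    (.of_forall fun x z _ ↦ hderiv x z)).2.differentiableAt

end Laplace

section ContourShift

theorem tendsto_integral_vertical_segment {f : ℂ → ℂ} {b s : ℝ → ℝ} (hs : ∀ R, |s R| = |R|)
    (hb : Tendsto b atTop (𝓝 0))
    (hfb : ∀ z : ℂ, z.re ≠ 0 → z.im ∈ Icc 0 1 → ‖f z‖ ≤ b |z.re|) :
    Tendsto (fun R : ℝ ↦ ∫ y : ℝ in (0)..1, f (s R + y * I)) atTop (𝓝 0) := by
  refine squeeze_zero_norm' ?_ hb
  filter_upwards [eventually_gt_atTop 0] with R hR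
  have hsR : |s R| = R := (hs R).trans (abs_of_pos hR)
  have hle : ‖∫ y : ℝ in (0)..1, f (s R + y * I)‖ ≤ b R * |1 - 0| := by
    refine intervalIntegral.norm_integral_le_of_norm_le_const fun y hy ↦ ?_
    rw [uIoc_of_le zero_le_one] at hy
    have hre : s R ≠ 0 := by rw [← abs_pos, hsR]; exact hR
    simpa [hsR] using hfb (s R + y * I) (by simpa using hre) (by simpa using ⟨hy.1.le, hy.2⟩)
  simpa using hle

theorem integral_eq_integral_add_I {f : ℂ → ℂ} {b : ℝ → ℝ}
    (hf : ∀ z : ℂ, z.im ∈ Icc 0 1 → DifferentiableAt ℂ f z)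
    (hf₀ : Integrable fun x : ℝ ↦ f x) (hf₁ : Integrable fun x : ℝ ↦ f (x + I))
    (hb : Tendsto b atTop (𝓝 0))
    (hfb : ∀ z : ℂ, z.re ≠ 0 → z.im ∈ Icc 0 1 → ‖f z‖ ≤ b |z.re|) :
    ∫ x : ℝ, f x = ∫ x : ℝ, f (x + I) := by
  have hrect (R : ℝ) : (∫ x : ℝ in (-R)..R, f x) - (∫ x : ℝ in (-R)..R, f (x + I)) +
      I • (∫ y : ℝ in (0)..1, f (R + y * I)) -
      I • (∫ y : ℝ in (0)..1, f ((-R : ℝ) + y * I)) = 0 := by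
    have hdiff : DifferentiableOn ℂ f (uIcc (-R : ℂ).re (R + I).re ×ℂ
        uIcc (-R : ℂ).im (R + I).im) := fun z hz ↦
      (hf z (by simpa [Complex.mem_reProdIm] using hz.2)).differentiableWithinAt
    simpa using Complex.integral_boundary_rect_eq_zero_of_differentiableOn f _ _ hdiff
  have h₀ := intervalIntegral_tendsto_integral hf₀ tendsto_neg_atTop_atBot tendsto_id
  have h₁ := intervalIntegral_tendsto_integral hf₁ tendsto_neg_atTop_atBot tendsto_id
  have hright := tendsto_integral_vertical_segment (s := fun R ↦ R) (fun _ ↦ rfl) hb hfb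
  have hleft := tendsto_integral_vertical_segment (s := fun R ↦ -R) abs_neg hb hfb
  have hlim := ((h₀.sub h₁).add (hright.const_smul I)).sub (hleft.const_smul I)
  simpa [sub_eq_zero] using tendsto_nhds_unique (hlim.congr hrect) tendsto_const_nhds

theorem exists_differentiableAt_eq_div {f g : ℂ → ℂ} {c : ℂ} (hf : Differentiable ℂ f)
    (hg : Differentiable ℂ g) (hfc : f c = 0) (hgc : g c = 0) (hg' : deriv g c ≠ 0) :
    ∃ k : ℂ → ℂ, (∀ z ≠ c, k z = f z / g z) ∧
      ∀ z, (z ≠ c → g z ≠ 0) → DifferentiableAt ℂ k z := by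
  have hdslope {h : ℂ → ℂ} (hh : Differentiable ℂ h) : Differentiable ℂ (dslope h c) := by
    rw [← differentiableOn_univ] at hh ⊢
    exact (Complex.differentiableOn_dslope univ_mem).mpr hh
  have hslope {h : ℂ → ℂ} (hc : h c = 0) {z : ℂ} (hz : z ≠ c) : dslope h c z = h z / (z - c) := by
    rw [dslope_of_ne _ hz, slope_def_field, hc, sub_zero]
  refine ⟨fun z ↦ dslope f c z / dslope g c z, fun z hz ↦ ?_, fun z hz ↦ ?_⟩
  · simp only [hslope hfc hz, hslope hgc hz, div_div_div_cancel_right₀ (sub_ne_zero.mpr hz)]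
  · refine (hdslope hf z).fun_div (hdslope hg z) ?_
    rcases eq_or_ne z c with rfl | hzc
    · rwa [dslope_same]
    · rw [hslope hgc hzc]
      exact div_ne_zero (hz hzc) (sub_ne_zero.mpr hzc)

end ContourShift

section Sech

theorem cosh_pi_mul_ofReal (x : ℝ) : Complex.cosh (π * x) = (Real.cosh (π * x) : ℝ) := by
  push_cast
  rfl

theorem cosh_pi_mul_ofReal_ne_zero (x : ℝ) : Complex.cosh (π * x) ≠ 0 := by
  rw [cosh_pi_mul_ofReal]
  exact_mod_cast (Real.cosh_pos _).ne'

theorem one_add_sq_div_two_le_cosh (x : ℝ) : 1 + x ^ 2 / 2 ≤ Real.cosh x := by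
  simpa [Finset.sum_range_succ] using
    sum_le_hasSum (Finset.range 2) (fun n _ ↦ by rw [pow_mul]; positivity) (Real.hasSum_cosh x)

theorem integrable_inv_cosh_pi_mul : Integrable fun x : ℝ ↦ (Real.cosh (π * x))⁻¹ := by
  refine integrable_inv_one_add_sq.mono' ?_ (.of_forall fun x ↦ ?_)
  · exact (((Real.continuous_cosh.comp (continuous_const_mul π)).inv₀
      fun x ↦ (Real.cosh_pos _).ne')).aestronglyMeasurable
  · rw [Real.norm_of_nonneg (inv_nonneg.mpr (Real.cosh_pos _).le)]
    refine inv_anti₀ (by positivity) (le_trans ?_ (one_add_sq_div_two_le_cosh _))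
    have hπ : 2 ≤ π ^ 2 := by nlinarith [Real.pi_gt_three]
    nlinarith [mul_le_mul_of_nonneg_right hπ (sq_nonneg x)]

theorem integral_inv_cosh_pi_mul : ∫ x : ℝ, (Real.cosh (π * x))⁻¹ = 1 := by
  have htop : Tendsto (fun x ↦ Real.sinh (π * x)) atTop atTop :=
    Real.sinhOrderIso.tendsto_atTop.comp (tendsto_id.const_mul_atTop Real.pi_pos)
  have hbot : Tendsto (fun x ↦ Real.sinh (π * x)) atBot atBot :=
    Real.sinhOrderIso.tendsto_atBot.comp (tendsto_id.const_mul_atBot Real.pi_pos)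
  have hderiv (x : ℝ) : HasDerivAt (fun x ↦ Real.arctan (Real.sinh (π * x)) / π)
      (Real.cosh (π * x))⁻¹ x := by
    have hlin : HasDerivAt (fun x ↦ π * x) π x := by simpa using (hasDerivAt_id x).const_mul π
    refine (hlin.sinh.arctan.div_const π).congr_deriv ?_
    have := Real.cosh_pos (π * x)
    rw [add_comm, ← Real.cosh_sq]
    field_simp
  rw [integral_of_hasDerivAt_of_tendsto hderiv integrable_inv_cosh_pi_mul
    (((Real.tendsto_arctan_atBot.mono_right nhdsWithin_le_nhds).comp hbot).div_const π)
    (((Real.tendsto_arctan_atTop.mono_right nhdsWithin_le_nhds).comp htop).div_const π)]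
  field_simp
  norm_num

theorem abs_sinh_re_le_norm_cosh (z : ℂ) : |Real.sinh z.re| ≤ ‖Complex.cosh z‖ := by
  have h := abs_norm_sub_norm_le (cexp z) (-cexp (-z))
  rw [norm_neg, sub_neg_eq_add, Complex.norm_exp, Complex.norm_exp, Complex.neg_re] at h
  rw [Real.sinh_eq, Complex.cosh, norm_div, abs_div, Complex.norm_two, abs_two]
  gcongr

theorem eq_I_div_two_of_cosh_pi_mul_eq_zero {z : ℂ} (hz : z.im ∈ Icc 0 1)
    (h : Complex.cosh (π * z) = 0) : z = I / 2 := by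
  obtain ⟨k, hk⟩ := Complex.cos_eq_zero_iff.mp ((Complex.cos_mul_I _).trans h)
  have hzk : z = -((2 * k + 1) / 2) * I := by
    have hπ : (π : ℂ) ≠ 0 := Complex.ofReal_ne_zero.mpr Real.pi_ne_zero
    refine mul_left_cancel₀ (mul_ne_zero hπ I_ne_zero) ?_
    linear_combination hk + ((2 * k + 1) / 2) * π * I_sq
  have him : z.im = -((2 * k + 1) / 2) := by simp [hzk]
  have hk₁ : k = -1 := by
    have h₀ : 0 ≤ -(2 * k + 1 : ℝ) := by linarith [hz.1]
    have h₁ : -(2 * k + 1 : ℝ) ≤ 2 := by linarith [hz.2]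
    norm_cast at h₀ h₁
    omega
  rw [hzk, hk₁]
  push_cast
  ring

theorem integrable_div_cosh_pi_mul {g : ℝ → ℂ} {M : ℝ} (hg : Continuous g)
    (hM : ∀ x, ‖g x‖ ≤ M) : Integrable fun x : ℝ ↦ g x / Complex.cosh (π * x) := by
  refine (integrable_inv_cosh_pi_mul.ofReal.bdd_mul hg.aestronglyMeasurable
    (.of_forall hM)).congr (.of_forall fun x ↦ ?_)
  simp [div_eq_mul_inv]

theorem integral_const_div_cosh_pi_mul (c : ℂ) :
    ∫ x : ℝ, c / Complex.cosh (π * x) = c := by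
  have h : ∫ x : ℝ, (((Real.cosh (π * x))⁻¹ : ℝ) : ℂ) = 1 := by
    rw [integral_complex_ofReal, integral_inv_cosh_pi_mul, Complex.ofReal_one]
  simp_rw [cosh_pi_mul_ofReal, div_eq_mul_inv, ← Complex.ofReal_inv, integral_const_mul, h, mul_one]

theorem exists_differentiableAt_eq_div_cosh {g : ℂ → ℂ} (hg : Differentiable ℂ g)
    (h₀ : g (I / 2) = 0) :
    ∃ k : ℂ → ℂ, (∀ z ≠ I / 2, k z = g z / Complex.cosh (π * z)) ∧
      ∀ z : ℂ, z.im ∈ Icc 0 1 → DifferentiableAt ℂ k z := by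
  have hcosh (z : ℂ) :
      HasDerivAt (fun z : ℂ ↦ Complex.cosh (π * z)) (Complex.sinh (π * z) * π) z :=
    ((hasDerivAt_id z).const_mul (π : ℂ)).ccosh.congr_deriv (by rw [id, mul_one])
  have harg : (π : ℂ) * (I / 2) = π / 2 * I := by ring
  obtain ⟨k, hk, hkd⟩ := exists_differentiableAt_eq_div hg (fun z ↦ (hcosh z).differentiableAt) h₀
    (by rw [harg, Complex.cosh_mul_I, Complex.cos_pi_div_two])
    (by simp [(hcosh _).deriv, harg, Complex.sinh_mul_I, Real.pi_ne_zero])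
  exact ⟨k, hk, fun z hz ↦ hkd z fun hne h ↦ hne (eq_I_div_two_of_cosh_pi_mul_eq_zero hz h)⟩

/-- The contour of `∫ g / cosh(π·)` may be shifted by `I`: the zero of `g` cancels the only zero
of `cosh(π·)` in the strip. -/
theorem integral_div_cosh_add_integral_div_cosh_eq_zero {g : ℂ → ℂ} {M : ℝ}
    (hg : Differentiable ℂ g) (hM : ∀ z : ℂ, z.im ∈ Icc 0 1 → ‖g z‖ ≤ M) (h₀ : g (I / 2) = 0) :
    (∫ x : ℝ, g x / Complex.cosh (π * x)) + ∫ x : ℝ, g (x + I) / Complex.cosh (π * x) = 0 := by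
  obtain ⟨k, hk, hkd⟩ := exists_differentiableAt_eq_div_cosh hg h₀
  have hk₀ (x : ℝ) : k x = g x / Complex.cosh (π * x) :=
    hk x fun h ↦ by simpa using congr_arg Complex.im h
  have hk₁ (x : ℝ) : k (x + I) = -(g (x + I) / Complex.cosh (π * x)) := by
    have hne : (x : ℂ) + I ≠ I / 2 := fun h ↦ by simpa using congr_arg Complex.im h
    rw [hk _ hne, mul_add, Complex.cosh_add_pi_mul_I, div_neg]
  have hint₀ := integrable_div_cosh_pi_mul (g := fun x ↦ g x)
    (hg.continuous.comp Complex.continuous_ofReal) (fun x ↦ hM x (by simp))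
  have hint₁ := integrable_div_cosh_pi_mul (g := fun x ↦ g (x + I))
    (hg.continuous.comp (by fun_prop)) (fun x ↦ hM (x + I) (by simp))
  have hdecay : Tendsto (fun R ↦ M / Real.sinh (π * R)) atTop (𝓝 0) :=
    (Real.sinhOrderIso.tendsto_atTop.comp
      (tendsto_id.const_mul_atTop Real.pi_pos)).const_div_atTop M
  have hbound (z : ℂ) (hre : z.re ≠ 0) (him : z.im ∈ Icc 0 1) :
      ‖k z‖ ≤ M / Real.sinh (π * |z.re|) := by
    have hsinh : Real.sinh (π * |z.re|) ≤ ‖Complex.cosh (π * z)‖ := by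
      simpa [Real.abs_sinh, abs_mul, abs_of_pos Real.pi_pos] using abs_sinh_re_le_norm_cosh (π * z)
    have hpos : 0 < Real.sinh (π * |z.re|) := Real.sinh_pos_iff.mpr (by positivity)
    rw [hk z fun h ↦ by simp [h] at hre, norm_div]
    exact div_le_div₀ ((norm_nonneg _).trans (hM z him)) (hM z him) hpos hsinh
  have hshift := integral_eq_integral_add_I hkd (by simpa only [hk₀] using hint₀)
    (by simpa only [hk₁] using hint₁.fun_neg) hdecay hbound
  simp only [hk₀, hk₁, integral_neg] at hshift
  rw [hshift, neg_add_cancel]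

theorem integral_div_cosh_add_integral_div_cosh {g : ℂ → ℂ} {M : ℝ} (hg : Differentiable ℂ g)
    (hM : ∀ z : ℂ, z.im ∈ Icc 0 1 → ‖g z‖ ≤ M) :
    (∫ x : ℝ, g x / Complex.cosh (π * x)) + ∫ x : ℝ, g (x + I) / Complex.cosh (π * x) =
      2 * g (I / 2) := by
  set c := g (I / 2)
  have hint₀ := integrable_div_cosh_pi_mul (g := fun x ↦ g x)
    (hg.continuous.comp Complex.continuous_ofReal) (fun x ↦ hM x (by simp))
  have hint₁ := integrable_div_cosh_pi_mul (g := fun x ↦ g (x + I))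
    (hg.continuous.comp (by fun_prop)) (fun x ↦ hM (x + I) (by simp))
  have hc := integrable_div_cosh_pi_mul (g := fun _ ↦ c) continuous_const (fun _ ↦ le_rfl)
  have h := integral_div_cosh_add_integral_div_cosh_eq_zero (g := fun z ↦ g z - c)
    (M := M + ‖c‖) (hg.sub_const c)
    (fun z hz ↦ (norm_sub_le _ _).trans (add_le_add_left (hM z hz) _)) (sub_self c)
  simp only [sub_div, integral_sub hint₀ hc, integral_sub hint₁ hc,
    integral_const_div_cosh_pi_mul] at h
  linear_combination h

end Sech

section Mordell

variable {τ : ℂ}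

theorem re_gaussian_exponent (hτ : 0 < τ.im) (z x : ℂ) :
    (π * I * x ^ 2 * τ - 2 * π * x * z).re =
      π * (x.im * τ.re + z.re) ^ 2 / τ.im + π * τ.im * x.im ^ 2 + 2 * π * (x.im * z.im) -
        π * (τ.im * x.re + x.im * τ.re + z.re) ^ 2 / τ.im := by
  simp only [pow_two, Complex.sub_re, Complex.mul_re, Complex.mul_im, Complex.ofReal_re,
    Complex.ofReal_im, Complex.I_re, Complex.I_im, Complex.re_ofNat, Complex.im_ofNat]
  field_simp
  ring

theorem exists_norm_cexp_gaussian_le (hτ : 0 < τ.im) (z : ℂ) :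
    ∃ M, ∀ x : ℂ, x.im ∈ Icc 0 1 → ‖cexp (π * I * x ^ 2 * τ - 2 * π * x * z)‖ ≤ M := by
  obtain ⟨C, hC⟩ := isCompact_Icc.exists_bound_of_continuousOn (s := Icc (0 : ℝ) 1)
    (f := fun y ↦ π * (y * τ.re + z.re) ^ 2 / τ.im + π * τ.im * y ^ 2 + 2 * π * (y * z.im))
    (by fun_prop)
  refine ⟨Real.exp C, fun x hx ↦ ?_⟩
  rw [Complex.norm_exp, re_gaussian_exponent hτ]
  have hsq : 0 ≤ π * (τ.im * x.re + x.im * τ.re + z.re) ^ 2 / τ.im := by positivity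
  exact Real.exp_le_exp.mpr ((sub_le_self _ hsq).trans ((Real.le_norm_self _).trans (hC _ hx)))

theorem integrable_mordell (hτ : 0 < τ.im) (z : ℂ) : Integrable fun x : ℝ ↦
    cexp (π * I * (x : ℂ) ^ 2 * τ - 2 * π * x * z) / Complex.cosh (π * x) := by
  obtain ⟨M, hM⟩ := exists_norm_cexp_gaussian_le hτ z
  exact integrable_div_cosh_pi_mul (by fun_prop) fun x ↦ hM x (by simp)

theorem integral_cexp_gaussian (hτ : 0 < τ.im) (c : ℂ) :
    ∫ x : ℝ, cexp (π * I * (x : ℂ) ^ 2 * τ - 2 * π * x * c) =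
      (τ / I) ^ (-(1 / 2 : ℂ)) * cexp (π * I * c ^ 2 / τ) := by
  have hre : 0 < (τ / I).re := by simpa [Complex.div_I] using hτ
  have hτ₀ := ne_zero_of_im_pos hτ
  calc ∫ x : ℝ, cexp (π * I * (x : ℂ) ^ 2 * τ - 2 * π * x * c)
      = 𝓕 (fun x : ℝ ↦ cexp (-π * (τ / I) * x ^ 2 + 2 * π * -c * x)) 0 := by
        rw [Real.fourier_real_eq]
        refine integral_congr_ae (.of_forall fun x ↦ ?_)
        simp only [mul_zero, neg_zero, AddChar.map_zero_eq_one, Complex.div_I, mul_neg, neg_mul,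
          neg_neg, one_smul]
        ring_nf
    _ = 1 / (τ / I) ^ (1 / 2 : ℂ) * cexp (-π / (τ / I) * ((0 : ℝ) + I * -c) ^ 2) :=
        congr_fun (fourier_gaussian_pi' hre (-c)) 0
    _ = (τ / I) ^ (-(1 / 2 : ℂ)) * cexp (π * I * c ^ 2 / τ) := by
        rw [Complex.cpow_neg, one_div]
        congr 2
        field_simp
        simp [mul_pow]

theorem mordell_add_mordell_add_one (hτ : 0 < τ.im) (z : ℂ) :
    mordell z τ + mordell (z + 1) τ =
      2 * ((τ / I) ^ (-(1 / 2 : ℂ)) * cexp (π * I * (z + 1 / 2) ^ 2 / τ)) := by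
  rw [mordell, mordell, ← integral_add (integrable_mordell hτ z) (integrable_mordell hτ _),
    ← integral_cexp_gaussian hτ, ← integral_const_mul]
  refine integral_congr_ae (.of_forall fun x ↦ ?_)
  have h₀ : cexp (π * I * (x : ℂ) ^ 2 * τ - 2 * π * x * z) =
      cexp (π * I * (x : ℂ) ^ 2 * τ - 2 * π * x * (z + 1 / 2)) * cexp (π * x) := by
    rw [← Complex.exp_add]
    ring_nf
  have h₁ : cexp (π * I * (x : ℂ) ^ 2 * τ - 2 * π * x * (z + 1)) =
      cexp (π * I * (x : ℂ) ^ 2 * τ - 2 * π * x * (z + 1 / 2)) * cexp (-(π * x)) := by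
    rw [← Complex.exp_add]
    ring_nf
  dsimp only
  rw [← add_div, h₀, h₁, div_eq_iff (cosh_pi_mul_ofReal_ne_zero x), Complex.cosh]
  ring

theorem mordell_add_mul_mordell_add_tau (hτ : 0 < τ.im) (z : ℂ) :
    mordell z τ + cexp (-(2 * π * I * z) - π * I * τ) * mordell (z + τ) τ =
      2 * cexp (-(π * I * z) - π * I * τ / 4) := by
  obtain ⟨M, hM⟩ := exists_norm_cexp_gaussian_le hτ z
  have hshift (x : ℂ) : cexp (π * I * (x + I) ^ 2 * τ - 2 * π * (x + I) * z) =
      cexp (-(2 * π * I * z) - π * I * τ) * cexp (π * I * x ^ 2 * τ - 2 * π * x * (z + τ)) := by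
    rw [← Complex.exp_add]
    congr 1
    linear_combination (2 * π * x * τ + π * I * τ) * I_sq
  have hhalf : π * I * (I / 2) ^ 2 * τ - 2 * π * (I / 2) * z =
      -(π * I * z) - π * I * τ / 4 := by
    linear_combination (π * I * τ / 4) * I_sq
  have h := integral_div_cosh_add_integral_div_cosh (by fun_prop) hM
  simpa only [mordell, hshift, hhalf, mul_div_assoc (cexp _), integral_const_mul] using h

theorem differentiable_mordell (hτ : 0 < τ.im) : Differentiable ℂ (mordell · τ) := by
  have hweight (z : ℂ) (x : ℝ) :
      cexp (π * I * (x : ℂ) ^ 2 * τ) / Complex.cosh (π * x) * cexp (-(2 * π) * z * x) =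
        cexp (π * I * (x : ℂ) ^ 2 * τ - 2 * π * x * z) / Complex.cosh (π * x) := by
    rw [div_mul_eq_mul_div, ← Complex.exp_add]
    ring_nf
  have hlaplace := differentiable_integral_mul_cexp (μ := volume)
    (w := fun x ↦ cexp (π * I * (x : ℂ) ^ 2 * τ) / Complex.cosh (π * x)) fun s ↦ by
      have hs : -(2 * π) * (-s / (2 * π)) = (s : ℂ) := by
        have hπ : (π : ℂ) ≠ 0 := Complex.ofReal_ne_zero.mpr Real.pi_ne_zero
        field_simp
      have h := integrable_mordell hτ (-s / (2 * π))
      simp only [← hweight] at h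
      rwa [hs] at h
  simpa only [mordell, Function.comp_def, hweight] using
    hlaplace.comp (f := fun z : ℂ ↦ -(2 * (π : ℂ)) * z) (by fun_prop)

end Mordell

section ModularTransformation

variable {τ : ℂ}

theorem mul_mu_add_tau (hτ : 0 < τ.im) {u v : ℂ} (hu : u ∉ tauLattice τ) (hv : v ∉ tauLattice τ) :
    cexp (-(2 * π * I * u)) * cexp (2 * π * I * v) * cexp (-(π * I * τ)) * mu (u + τ) v τ =
      -mu u v τ + cexp (-(π * I * u)) * cexp (π * I * v) * cexp (-(π * I * τ) / 4) := by
  have h₁ : cexp (-(2 * π * I * u)) * cexp (2 * π * I * v) * cexp (-(π * I * τ)) *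
      cexp (2 * π * I * (u - v) + π * I * τ) = 1 := by
    simp_rw [← Complex.exp_add, ← Complex.exp_zero]
    ring_nf
  have h₂ : cexp (-(2 * π * I * u)) * cexp (2 * π * I * v) * cexp (-(π * I * τ)) *
      cexp (π * I * (u - v) + 3 * π * I * τ / 4) =
        cexp (-(π * I * u)) * cexp (π * I * v) * cexp (-(π * I * τ) / 4) := by
    simp_rw [← Complex.exp_add]
    ring_nf
  rw [mu_add_tau hτ hu hv]
  linear_combination h₂ - mu u v τ * h₁

theorem im_neg_one_div_pos (hτ : 0 < τ.im) : 0 < (-1 / τ).im := by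
  simpa [neg_div] using div_pos hτ (Complex.normSq_pos.mpr (ne_zero_of_im_pos hτ))

theorem div_tau_mem_tauLattice (hτ : 0 < τ.im) {u : ℂ} :
    u / τ ∈ tauLattice (-1 / τ) ↔ u ∈ tauLattice τ := by
  have hτ₀ := ne_zero_of_im_pos hτ
  simp_rw [mem_tauLattice]
  constructor
  · rintro ⟨m, n, h⟩
    refine ⟨n, -m, ?_⟩
    push_cast
    field_simp at h
    linear_combination h
  · rintro ⟨m, n, rfl⟩
    refine ⟨-n, m, ?_⟩
    push_cast
    field_simp
    ring

/-- The factor `θ(z)` cancels the possible pole at `0` and makes the multipliers constant. -/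
theorem eq_zero_of_mu_quasiperiodic (hτ : 0 < τ.im) {v r : ℂ} (hv : v ∉ tauLattice τ) {f : ℂ → ℂ}
    (hf : ∀ z ∉ tauLattice τ, DifferentiableAt ℂ f z)
    (h₀ : Tendsto (fun z ↦ z * f z) (𝓝[≠] 0) (𝓝 r)) (h₁ : ∀ z ∉ tauLattice τ, f (z + 1) = -f z)
    (hτf : ∀ z ∉ tauLattice τ, f (z + τ) = -cexp (2 * π * I * (z - v) + π * I * τ) * f z) :
    ∀ z ∉ tauLattice τ, f z = 0 := by
  intro z hz
  refine (mul_eq_zero.mp ?_).resolve_right (jtheta_ne_zero hτ hz)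
  refine eq_zero_of_quasiperiodic hτ hv (f := fun z ↦ f z * jtheta z τ)
    (fun z hz ↦ (hf z hz).fun_mul (differentiable_jtheta hτ z)) ?_ (fun z hz ↦ ?_)
    (fun z hz ↦ ?_) z hz
  · have hθ : Tendsto (jtheta · τ) (𝓝[≠] 0) (𝓝 0) :=
      ((differentiable_jtheta hτ).continuous.tendsto' 0 0 (jtheta_zero τ)).mono_left
        nhdsWithin_le_nhds
    simpa [mul_assoc] using h₀.mul hθ
  · rw [h₁ z hz, jtheta_add_one, neg_mul_neg]
  · have hexp : cexp (2 * π * I * (z - v) + π * I * τ) * cexp (-(2 * π * I * z) - π * I * τ) =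
        cexp (-(2 * π * I * v)) := by
      rw [← Complex.exp_add]
      ring_nf
    rw [hτf z hz, jtheta_add_tau, ← hexp]
    ring

/-- The defect of the transformation law of `μ(u, v; τ)` under `τ ↦ -1/τ`, as a function of `u`. -/
def modularDefect (v τ u : ℂ) : ℂ :=
  mu u v τ + (τ / I) ^ (-(1 / 2 : ℂ)) * cexp (π * I * (u - v) ^ 2 / τ) *
    mu (u / τ) (v / τ) (-1 / τ) - 1 / 2 * mordell (u - v) τ

theorem differentiableAt_modularDefect (hτ : 0 < τ.im) {u : ℂ} (hu : u ∉ tauLattice τ) (v : ℂ) :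
    DifferentiableAt ℂ (modularDefect v τ) u := by
  have hmu := differentiableAt_mu_left hτ hu v
  have hmu' : DifferentiableAt ℂ (fun u ↦ mu (u / τ) (v / τ) (-1 / τ)) u :=
    (differentiableAt_mu_left (im_neg_one_div_pos hτ) ((div_tau_mem_tauLattice hτ).not.mpr hu)
      (v / τ)).comp u (f := fun u ↦ u / τ) (by fun_prop)
  have hmordell : DifferentiableAt ℂ (fun u ↦ mordell (u - v) τ) u :=
    (differentiable_mordell hτ _).comp u (f := fun u ↦ u - v) (by fun_prop)
  unfold modularDefect
  fun_prop

theorem exists_tendsto_mul_modularDefect (hτ : 0 < τ.im) (v : ℂ) :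
    ∃ r, Tendsto (fun u ↦ u * modularDefect v τ u) (𝓝[≠] 0) (𝓝 r) := by
  have hτ₀ := ne_zero_of_im_pos hτ
  have hdiv : Tendsto (fun u ↦ u / τ) (𝓝[≠] 0) (𝓝[≠] 0) := by
    refine tendsto_nhdsWithin_of_tendsto_nhds_of_eventually_within _
      ((Continuous.tendsto' (by fun_prop) 0 0 (zero_div τ)).mono_left nhdsWithin_le_nhds) ?_
    filter_upwards [self_mem_nhdsWithin] with u hu
    exact div_ne_zero hu hτ₀
  have hcont : Continuous fun u ↦
      (τ / I) ^ (-(1 / 2 : ℂ)) * cexp (π * I * (u - v) ^ 2 / τ) * τ := by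
    fun_prop
  have hmordell : Continuous fun u ↦ u * (1 / 2 * mordell (u - v) τ) := by
    have := (differentiable_mordell hτ).continuous
    fun_prop
  have hlim := ((tendsto_mul_mu hτ v).add ((hcont.continuousWithinAt (s := {0}ᶜ)).tendsto.mul
    ((tendsto_mul_mu (im_neg_one_div_pos hτ) (v / τ)).comp hdiv))).sub
    (hmordell.continuousWithinAt (s := {0}ᶜ)).tendsto
  refine ⟨_, hlim.congr fun u ↦ ?_⟩
  simp only [modularDefect, Function.comp_apply]
  field_simp

theorem modularDefect_add_one (hτ : 0 < τ.im) {u v : ℂ} (hu : u ∉ tauLattice τ)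
    (hv : v ∉ tauLattice τ) : modularDefect v τ (u + 1) = -modularDefect v τ u := by
  have hmu := mu_add_tau (im_neg_one_div_pos hτ)
    ((div_tau_mem_tauLattice hτ).not.mpr (add_one_mem_tauLattice.not.mpr hu))
    ((div_tau_mem_tauLattice hτ).not.mpr hv)
  rw [show (u + 1) / τ + -1 / τ = u / τ by ring] at hmu
  have hmordell := mordell_add_mordell_add_one hτ (u - v)
  have hexp₁ : cexp (π * I * (u - v + 1) ^ 2 / τ) = cexp (π * I * (u - v) ^ 2 / τ) *
      cexp (2 * π * I * ((u + 1) / τ - v / τ) + π * I * (-1 / τ)) := by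
    rw [← Complex.exp_add]
    ring_nf
  have hexp₂ : cexp (π * I * (u - v + 1 / 2) ^ 2 / τ) = cexp (π * I * (u - v) ^ 2 / τ) *
      cexp (π * I * ((u + 1) / τ - v / τ) + 3 * π * I * (-1 / τ) / 4) := by
    rw [← Complex.exp_add]
    ring_nf
  rw [hexp₂] at hmordell
  rw [modularDefect, modularDefect, mu_add_one, add_sub_right_comm u 1 v, hexp₁]
  linear_combination (-1 / 2) * hmordell +
    (τ / I) ^ (-(1 / 2 : ℂ)) * cexp (π * I * (u - v) ^ 2 / τ) * hmu

theorem modularDefect_add_tau (hτ : 0 < τ.im) {u v : ℂ} (hu : u ∉ tauLattice τ)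
    (hv : v ∉ tauLattice τ) : modularDefect v τ (u + τ) =
      -cexp (2 * π * I * (u - v) + π * I * τ) * modularDefect v τ u := by
  have hτ₀ := ne_zero_of_im_pos hτ
  have hmordell := mordell_add_mul_mordell_add_tau hτ (u - v)
  have hexp₁ : cexp (π * I * (u - v + τ) ^ 2 / τ) =
      cexp (π * I * (u - v) ^ 2 / τ) * cexp (2 * π * I * (u - v) + π * I * τ) := by
    rw [← Complex.exp_add]
    congr 1
    field_simp
    ring
  have hexp₂ : cexp (2 * π * I * (u - v) + π * I * τ) *
      cexp (-(2 * π * I * (u - v)) - π * I * τ) = 1 := by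
    rw [← Complex.exp_add, ← Complex.exp_zero]
    ring_nf
  have hexp₃ : cexp (π * I * (u - v) + 3 * π * I * τ / 4) =
      cexp (2 * π * I * (u - v) + π * I * τ) * cexp (-(π * I * (u - v)) - π * I * τ / 4) := by
    rw [← Complex.exp_add]
    ring_nf
  rw [modularDefect, modularDefect, mu_add_tau hτ hu hv, add_div, div_self hτ₀, mu_add_one,
    add_sub_right_comm u τ v, hexp₁, hexp₃]
  linear_combination (-1 / 2) * cexp (2 * π * I * (u - v) + π * I * τ) * hmordell +
    1 / 2 * mordell (u - v + τ) τ * hexp₂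

theorem modularDefect_eq_zero (hτ : 0 < τ.im) {u v : ℂ} (hu : u ∉ tauLattice τ)
    (hv : v ∉ tauLattice τ) : modularDefect v τ u = 0 := by
  obtain ⟨r, hr⟩ := exists_tendsto_mul_modularDefect hτ v
  exact eq_zero_of_mu_quasiperiodic hτ hv (fun z hz ↦ differentiableAt_modularDefect hτ hz v) hr
    (fun z hz ↦ modularDefect_add_one hτ hz hv) (fun z hz ↦ modularDefect_add_tau hτ hz hv) u hu

theorem mu_neg_inv (hτ : 0 < τ.im) {u v : ℂ} (hu : u ∉ tauLattice τ) (hv : v ∉ tauLattice τ) :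
    (τ / I) ^ (-(1 / 2 : ℂ)) * cexp (π * I * (u - v) ^ 2 / τ) * mu (u / τ) (v / τ) (-1 / τ) =
      -mu u v τ + 1 / 2 * mordell (u - v) τ := by
  have h := modularDefect_eq_zero hτ hu hv
  rw [modularDefect] at h
  linear_combination h

end ModularTransformation

/-- Zwegers's transformation properties of `μ` (Lemma 6.1 of the paper).  Here
`a = e^{2πiu}`, `b = e^{2πiv}`, `a^{-1/2} = e^{-πiu}`, `b^{1/2} = e^{πiv}`,
`q^{-1/2} = e^{-πiτ}`, `q^{-1/8} = e^{-πiτ/4}`, `ζ₈⁻¹ = e^{-πi/4}`, and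
`(τ/i)^{-1/2}` is the principal branch. -/
theorem stmt15 (τ u v : ℂ) (hτ : 0 < τ.im)
    (hu : ¬∃ m n : ℤ, u = (m : ℂ) * τ + (n : ℂ))
    (hv : ¬∃ m n : ℤ, v = (m : ℂ) * τ + (n : ℂ)) :
    mu u v τ = mu v u τ ∧
    mu (u + 1) v τ = -mu u v τ ∧
    Complex.exp (-(2 * (π : ℂ) * I * u)) * Complex.exp (2 * (π : ℂ) * I * v) *
        Complex.exp (-((π : ℂ) * I * τ)) * mu (u + τ) v τ =
      -mu u v τ +
        Complex.exp (-((π : ℂ) * I * u)) * Complex.exp ((π : ℂ) * I * v) *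
          Complex.exp (-((π : ℂ) * I * τ) / 4) ∧
    mu u v (τ + 1) = Complex.exp (-((π : ℂ) * I) / 4) * mu u v τ ∧
    (τ / I) ^ (-(1 / 2 : ℂ)) * Complex.exp ((π : ℂ) * I * (u - v) ^ 2 / τ) *
        mu (u / τ) (v / τ) (-1 / τ) =
      -mu u v τ + (1 / 2) * mordell (u - v) τ := by
  rw [← mem_tauLattice] at hu hv
  exact ⟨mu_comm hτ hu hv, mu_add_one u v τ, mul_mu_add_tau hτ hu hv, mu_modulus_add_one u v τ,
    mu_neg_inv hτ hu hv⟩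
end
end

section
/- Define G: ℍ → ℂ by G(τ) = −(2i/√π)·Σ_{l≥0} (−1)^l·Γ(1/2, π·(2l+1)²·Im(τ)/2)·e^{−2πiτ(2l+1)²/8}. Then G is real analytic on ℍ and satisfies ∂G/∂τ̄ (τ) = −(2·Im(τ))^{−1/2}·conj(η(τ)³) for all τ ∈ ℍ, where ∂/∂τ̄ denotes the antiholomorphic Wirtinger derivative (1/2)(∂/∂x + i·∂/∂y) in τ = x + iy, and conj denotes complex conjugation. (G is the non-holomorphic part Q⁻ of the weight 1/2 harmonic weak Maass form Q; this identity says that the shadow of Q is proportional to η³.) -/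
noncomputable section
open Complex Real

/-- Dedekind eta function `η(τ) = e^{πiτ/12} ∏_{n≥1} (1 − qⁿ)`. -/
def dedekindEta (τ : ℂ) : ℂ :=
  Complex.exp ((π : ℂ) * I * τ / 12) * ∏' n : ℕ, (1 - nome τ ^ (n + 1))

/-- The upper incomplete Gamma function `Γ(s,x) = ∫_x^∞ e^{−t} t^{s−1} dt` (real `x > 0`). -/
def incGamma (s x : ℝ) : ℝ := ∫ t in Set.Ioi x, Real.exp (-t) * t ^ (s - 1)

/-- `G(τ) = −(2i/√π) Σ_{l≥0} (−1)^l Γ(1/2, π(2l+1)² Im τ/2) e^{−2πiτ(2l+1)²/8}`,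
the non-holomorphic part `Q⁻` of the harmonic Maass form `Q`. -/
def Gfun (τ : ℂ) : ℂ :=
  -(2 * I / (Real.sqrt π : ℂ)) *
    ∑' l : ℕ, (-1 : ℂ) ^ l * (incGamma (1 / 2) (π * (2 * l + 1) ^ 2 * τ.im / 2) : ℂ) *
      Complex.exp (-(2 * (π : ℂ) * I * τ * ((2 * (l : ℂ) + 1) ^ 2) / 8))

/-- The antiholomorphic Wirtinger derivative `(1/2)(∂/∂x + i ∂/∂y)` of `f : ℂ → ℂ` at `z`. -/
def wirtingerBar (f : ℂ → ℂ) (z : ℂ) : ℂ :=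
  (1 / 2) * (fderiv ℝ f z 1 + I * fderiv ℝ f z I)

/-!
Replacing `conj τ` in `Gfun` by an independent variable `w`, so that `Im τ` becomes
`(τ - w) / (2i)`, gives a normally convergent series of functions of `(τ, w)` that are holomorphic
in each variable. By Osgood's lemma its sum is jointly analytic, so `Gfun`, its restriction to
`w = conj τ`, is real analytic, and `∂/∂τ̄` becomes `∂/∂w`. Since
`∂Γ(1/2, x)/∂x = -e^{-x} x^{-1/2}`, this derivative cancels the factor `e^{-πi(2l+1)²τ/4}`, leaving
`-(2 Im τ)^{-1/2}` times the conjugate of Jacobi's series `∑ (-1)^l (2l+1) q^{(2l+1)²/8}`.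

Jacobi's identity equates that series with `η³`. Its finite form is the derivative at `z = 1` of
the expansion of `(1 - z) ∏_{i ≤ n} (1 - z q^i)(1 - z⁻¹ q^i)`, whose coefficients are, up to signs
and powers of `q`, Gaussian binomials; the infinite form is the limit `n → ∞`, by dominated
convergence.
-/

section Osgood

open Filter Metric Set Topology

lemma ne_of_mem_sphere_of_mem_ball {E : Type*} [PseudoMetricSpace E] {x y c : E} {r : ℝ}
    (hx : x ∈ sphere c r) (hy : y ∈ ball c r) : x ≠ y := by
  rintro rfl
  exact (mem_ball.1 hy).ne hx

lemma circleIntegral_continuousMap_apply {S E : Type*} [TopologicalSpace S] [CompactSpace S]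
    [NormedAddCommGroup E] [NormedSpace ℂ E] [CompleteSpace E] {F : ℂ → C(S, E)} {c : ℂ} {R : ℝ}
    (hF : CircleIntegrable F c R) (s : S) : (∮ z in C(c, R), F z) s = ∮ z in C(c, R), F z s := by
  simp only [circleIntegral, intervalIntegral.integral_of_le two_pi_pos.le]
  exact ContinuousMap.integral_apply ((intervalIntegrable_iff_integrableOn_Ioc_of_le
    two_pi_pos.le).1 hF.out) s

lemma differentiableOn_continuousMap_of_forall_apply {S E : Type*} [TopologicalSpace S]
    [CompactSpace S] [NormedAddCommGroup E] [NormedSpace ℂ E] [CompleteSpace E]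
    {F : ℂ → C(S, E)} {V : Set ℂ} (hV : IsOpen V) (hcont : ContinuousOn F V)
    (hdiff : ∀ s, DifferentiableOn ℂ (fun z => F z s) V) : DifferentiableOn ℂ F V := by
  intro z hz
  obtain ⟨R, hR, hRV⟩ := nhds_basis_closedBall.mem_iff.1 (hV.mem_nhds hz)
  lift R to NNReal using hR.le
  have hsphere : ContinuousOn F (sphere z R) := hcont.mono (sphere_subset_closedBall.trans hRV)
  have hcauchy : ∀ w ∈ ball z R,
      F w = (2 * π * I : ℂ)⁻¹ • ∮ ζ in C(z, R), (ζ - w)⁻¹ • F ζ := by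
    intro w hw
    have hkernel : ContinuousOn (fun ζ => (ζ - w)⁻¹ • F ζ) (sphere z R) :=
      (continuousOn_id.sub continuousOn_const).inv₀
        (fun ζ hζ => sub_ne_zero.2 (ne_of_mem_sphere_of_mem_ball hζ hw)) |>.smul hsphere
    ext s
    rw [ContinuousMap.smul_apply,
      circleIntegral_continuousMap_apply (hkernel.circleIntegrable hR.le)]
    exact (((hdiff s).mono hRV).diffContOnCl_ball subset_rfl
      |>.two_pi_i_inv_smul_circleIntegral_sub_inv_smul hw).symm
  have hseries := hasFPowerSeriesOn_cauchy_integral (hsphere.circleIntegrable hR.le)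
    (by exact_mod_cast hR)
  exact (hseries.analyticAt.differentiableAt.congr_of_eventuallyEq
    (eventually_of_mem (ball_mem_nhds z hR) hcauchy)).differentiableWithinAt

lemma differentiableOn_mkD_domRestrict {X E : Type*} [TopologicalSpace X] [NormedAddCommGroup E]
    [NormedSpace ℂ E] [CompleteSpace E] {f : ℂ → X → E} {V : Set ℂ} {S : Set X} [CompactSpace S]
    (hV : IsOpen V) (hcont : ContinuousOn (fun p : ℂ × X => f p.1 p.2) (V ×ˢ S))
    (hdiff : ∀ s ∈ S, DifferentiableOn ℂ (fun z => f z s) V) :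
    DifferentiableOn ℂ (fun z => ContinuousMap.mkD (S.domRestrict (f z)) 0) V := by
  have happly : ∀ z ∈ V, ∀ s : S, ContinuousMap.mkD (S.domRestrict (f z)) 0 s = f z s :=
    fun z hz s => ContinuousMap.mkD_apply_of_continuousOn
      (hcont.comp (continuousOn_const.prodMk continuousOn_id) fun x hx => ⟨hz, hx⟩)
  refine differentiableOn_continuousMap_of_forall_apply hV ?_
    fun s => (hdiff s s.2).congr fun z hz => happly z hz s
  rw [continuousOn_iff_continuous_domRestrict]
  refine ContinuousMap.continuous_of_continuous_uncurry _ ?_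
  refine (hcont.comp_continuous (f := fun p : V × S => ((p.1 : ℂ), (p.2 : X))) (by fun_prop)
    fun p => ⟨p.1.2, p.2.2⟩).congr fun p => (happly p.1 p.1.2 p.2).symm

/-- The contour integral over the circle `C(c, R)`, as a continuous linear functional on the
continuous functions on that circle. -/
def circleIntegralCLM (c : ℂ) (R : ℝ) (hR : 0 ≤ R) : C(sphere c R, ℂ) →L[ℂ] ℂ :=
  LinearMap.mkContinuous
    { toFun := fun φ => ∫ θ in 0..2 * π,
        deriv (circleMap c R) θ * φ ⟨circleMap c R θ, circleMap_mem_sphere c hR θ⟩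
      map_add' := fun φ ψ => by
        simp only [ContinuousMap.add_apply, mul_add]
        refine intervalIntegral.integral_add ?_ ?_ <;>
        · refine Continuous.intervalIntegrable ?_ _ _
          simp only [deriv_circleMap]
          fun_prop
      map_smul' := fun a φ => by
        simp only [ContinuousMap.smul_apply, smul_eq_mul, mul_left_comm _ a,
          intervalIntegral.integral_const_mul, RingHom.id_apply] }
    (R * |2 * π - 0|) fun φ => by
      rw [mul_right_comm]
      refine intervalIntegral.norm_integral_le_of_norm_le_const fun θ _ => ?_
      rw [norm_mul, deriv_circleMap]
      simpa [abs_of_nonneg hR] using mul_le_mul_of_nonneg_left (φ.norm_coe_le_norm _) hR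

lemma circleIntegralCLM_apply {c : ℂ} {R : ℝ} (hR : 0 ≤ R) {φ : C(sphere c R, ℂ)} {f : ℂ → ℂ}
    (h : ∀ ζ, φ ζ = f ζ) : circleIntegralCLM c R hR φ = ∮ ζ in C(c, R), f ζ := by
  simp [circleIntegralCLM, circleIntegral, h]

/-- The restriction of `f` to the circle `C(c, R)` as a continuous function; if `f` is not
continuous there, this is the junk value `0`. -/
def circleRestrict (c : ℂ) (R : ℝ) (f : ℂ → ℂ) : C(sphere c R, ℂ) :=
  ContinuousMap.mkD ((sphere c R).domRestrict f) 0

lemma differentiableOn_circleRestrict_cauchyKernel (c : ℂ) (R : ℝ) :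
    DifferentiableOn ℂ (fun w => circleRestrict c R fun ζ => (ζ - w)⁻¹) (ball c R) := by
  refine differentiableOn_mkD_domRestrict isOpen_ball ?_ ?_
  · exact (continuousOn_snd.sub continuousOn_fst).inv₀
      fun p hp => sub_ne_zero.2 (ne_of_mem_sphere_of_mem_ball hp.2 hp.1)
  · exact fun ζ hζ => ((differentiableOn_const ζ).sub differentiableOn_id).inv
      fun w hw => sub_ne_zero.2 (ne_of_mem_sphere_of_mem_ball hζ hw)

lemma circleIntegralCLM_cauchyKernel_mul {c w : ℂ} {R : ℝ} {g : ℂ → ℂ} (hR : 0 ≤ R)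
    (hg : DifferentiableOn ℂ g (closedBall c R)) (hw : w ∈ ball c R) :
    (2 * π * I : ℂ)⁻¹ * circleIntegralCLM c R hR
      (circleRestrict c R (fun ζ => (ζ - w)⁻¹) * circleRestrict c R g) = g w := by
  rw [circleIntegralCLM_apply hR (f := fun ζ => (ζ - w)⁻¹ • g ζ)]
  · exact (hg.diffContOnCl_ball subset_rfl).two_pi_i_inv_smul_circleIntegral_sub_inv_smul hw
  · intro ζ
    rw [ContinuousMap.mul_apply, circleRestrict, circleRestrict,
      ContinuousMap.mkD_apply_of_continuousOn, ContinuousMap.mkD_apply_of_continuousOn, smul_eq_mul]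
    · exact hg.continuousOn.mono sphere_subset_closedBall
    · exact (continuousOn_id.sub continuousOn_const).inv₀
        fun ζ hζ => sub_ne_zero.2 (ne_of_mem_sphere_of_mem_ball hζ hw)

/-- Osgood's lemma. -/
theorem analyticAt_of_continuousOn_of_differentiableAt {f : ℂ × ℂ → ℂ} {U : Set (ℂ × ℂ)}
    (hU : IsOpen U) (hcont : ContinuousOn f U)
    (hfst : ∀ p ∈ U, DifferentiableAt ℂ (fun z => f (z, p.2)) p.1)
    (hsnd : ∀ p ∈ U, DifferentiableAt ℂ (fun w => f (p.1, w)) p.2) {p : ℂ × ℂ} (hp : p ∈ U) :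
    AnalyticAt ℂ f p := by
  obtain ⟨a, b⟩ := p
  obtain ⟨R, hR, hRU⟩ := nhds_basis_closedBall.mem_iff.1 (hU.mem_nhds hp)
  rw [← closedBall_prod_same] at hRU
  have hmem : ∀ z ∈ ball a R, ∀ w ∈ closedBall b R, (z, w) ∈ U := fun z hz w hw =>
    hRU ⟨ball_subset_closedBall hz, hw⟩
  have hslice : DifferentiableOn ℂ (fun z => circleRestrict b R fun w => f (z, w)) (ball a R) :=
    differentiableOn_mkD_domRestrict isOpen_ball
      (hcont.mono fun p hp => hmem p.1 hp.1 p.2 (sphere_subset_closedBall hp.2))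
      fun ζ hζ z hz => (hfst (z, ζ)
        (hmem z hz ζ (sphere_subset_closedBall hζ))).differentiableWithinAt
  have hcauchy : ∀ q ∈ ball a R ×ˢ ball b R,
      (2 * π * I : ℂ)⁻¹ * circleIntegralCLM b R hR.le
        (circleRestrict b R (fun ζ => (ζ - q.2)⁻¹) * circleRestrict b R fun w => f (q.1, w)) =
      f q := fun q hq =>
    circleIntegralCLM_cauchyKernel_mul hR.le
      (fun w hw => (hsnd (q.1, w) (hmem q.1 hq.1 w hw)).differentiableWithinAt) hq.2
  refine AnalyticAt.congr (analyticAt_const.mul ?_) (eventually_of_mem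
    (prod_mem_nhds (ball_mem_nhds a hR) (ball_mem_nhds b hR)) hcauchy)
  have hkernel_an : AnalyticAt ℂ (fun w => circleRestrict b R fun ζ => (ζ - w)⁻¹) (a, b).2 :=
    (differentiableOn_circleRestrict_cauchyKernel b R).analyticAt (ball_mem_nhds b hR)
  have hslice_an : AnalyticAt ℂ (fun z => circleRestrict b R fun w => f (z, w)) (a, b).1 :=
    hslice.analyticAt (ball_mem_nhds a hR)
  exact (ContinuousLinearMap.analyticAt _ _).comp
    ((hkernel_an.comp analyticAt_snd).mul (hslice_an.comp analyticAt_fst))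

end Osgood

section IncompleteGamma

open Filter MeasureTheory Set Topology

/-- The integrand `e^{-ζ} ζ^{s-1}` of the incomplete Gamma function at complex `ζ`. -/
def gammaIntegrand (s : ℝ) (ζ : ℂ) : ℂ := cexp (-ζ) * ζ ^ ((s : ℂ) - 1)

/-- The incomplete Gamma function at complex `z`, `0 < re z`, as the integral of
`gammaIntegrand s` along the horizontal ray from `z`. -/
def complexIncGamma (s : ℝ) (z : ℂ) : ℂ := ∫ t in Ioi (0 : ℝ), gammaIntegrand s (z + t)

lemma norm_gammaIntegrand_le {s δ : ℝ} {ζ : ℂ} (hs : s ≤ 1) (hδ : 0 < δ) (hζ : δ ≤ ζ.re) :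
    ‖gammaIntegrand s ζ‖ ≤ rexp (-ζ.re) * δ ^ (s - 1) := by
  have hnorm : ‖ζ ^ ((s : ℂ) - 1)‖ = ‖ζ‖ ^ (s - 1) := by
    rw [← ofReal_one, ← ofReal_sub, norm_cpow_real]
  rw [gammaIntegrand, norm_mul, Complex.norm_exp, neg_re, hnorm]
  exact mul_le_mul_of_nonneg_left
    (rpow_le_rpow_of_nonpos hδ (hζ.trans (re_le_norm ζ)) (sub_nonpos.2 hs)) (Real.exp_nonneg _)

lemma hasDerivAt_gammaIntegrand (s : ℝ) {ζ : ℂ} (hζ : 0 < ζ.re) :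
    HasDerivAt (gammaIntegrand s)
      (-gammaIntegrand s ζ + (s - 1) * gammaIntegrand (s - 1) ζ) ζ := by
  refine ((hasDerivAt_neg ζ).cexp.mul
    ((hasDerivAt_id ζ).cpow_const (c := (s : ℂ) - 1) (Or.inl hζ))).congr_deriv ?_
  rw [gammaIntegrand, gammaIntegrand, ofReal_sub, ofReal_one, id]
  ring

lemma continuousOn_gammaIntegrand (s : ℝ) : ContinuousOn (gammaIntegrand s) {ζ | 0 < ζ.re} :=
  fun _ hζ => (hasDerivAt_gammaIntegrand s hζ).continuousAt.continuousWithinAt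

lemma continuousOn_gammaIntegrand_ray (s : ℝ) {z : ℂ} (hz : 0 < z.re) :
    ContinuousOn (fun t : ℝ => gammaIntegrand s (z + t)) (Ici 0) :=
  (continuousOn_gammaIntegrand s).comp (by fun_prop) fun t (ht : 0 ≤ t) => by
    simpa using add_pos_of_pos_of_nonneg hz ht

lemma norm_gammaIntegrand_ray_le {s δ t : ℝ} {z : ℂ} (hs : s ≤ 1) (hδ : 0 < δ) (hz : δ ≤ z.re)
    (ht : 0 ≤ t) : ‖gammaIntegrand s (z + t)‖ ≤ rexp (-z.re) * δ ^ (s - 1) * rexp (-t) := by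
  refine (norm_gammaIntegrand_le hs hδ (by simpa using hz.trans (by linarith))).trans_eq ?_
  rw [add_re, ofReal_re, neg_add, Real.exp_add]
  ring

lemma integrableOn_gammaIntegrand_ray {s : ℝ} {z : ℂ} (hs : s ≤ 1) (hz : 0 < z.re) :
    IntegrableOn (fun t : ℝ => gammaIntegrand s (z + t)) (Ioi 0) := by
  refine Integrable.mono' ((integrableOn_exp_neg_Ioi 0).const_mul (rexp (-z.re) * z.re ^ (s - 1)))
    (((continuousOn_gammaIntegrand_ray s hz).mono Ioi_subset_Ici_self).aestronglyMeasurable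
      measurableSet_Ioi) ?_
  filter_upwards [ae_restrict_mem measurableSet_Ioi] with t ht
  exact norm_gammaIntegrand_ray_le hs hz le_rfl (le_of_lt ht)

lemma norm_complexIncGamma_le {s : ℝ} {z : ℂ} (hs : s ≤ 1) (hz : 0 < z.re) :
    ‖complexIncGamma s z‖ ≤ rexp (-z.re) * z.re ^ (s - 1) := by
  calc ‖complexIncGamma s z‖
      ≤ ∫ t in Ioi (0 : ℝ), rexp (-z.re) * z.re ^ (s - 1) * rexp (-t) := by
        refine norm_integral_le_of_norm_le ((integrableOn_exp_neg_Ioi 0).const_mul _) ?_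
        filter_upwards [ae_restrict_mem measurableSet_Ioi] with t ht
        exact norm_gammaIntegrand_ray_le hs hz le_rfl (le_of_lt ht)
    _ = rexp (-z.re) * z.re ^ (s - 1) := by
        rw [integral_const_mul, integral_exp_neg_Ioi_zero, mul_one]

lemma hasDerivAt_gammaIntegrand_ray (s : ℝ) {z : ℂ} {t : ℝ} (hz : 0 < z.re) (ht : 0 ≤ t) :
    HasDerivAt (fun t : ℝ => gammaIntegrand s (z + t))
      (-gammaIntegrand s (z + t) + (s - 1) * gammaIntegrand (s - 1) (z + t)) t := by
  have hre : 0 < (z + t : ℂ).re := by simpa using add_pos_of_pos_of_nonneg hz ht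
  simpa only [mul_one, Function.comp_def, id, ofReal_one] using
    (hasDerivAt_gammaIntegrand s hre).comp t ((hasDerivAt_id t).ofReal_comp.const_add z)

lemma tendsto_gammaIntegrand_ray {s : ℝ} {z : ℂ} (hs : s ≤ 1) (hz : 0 < z.re) :
    Tendsto (fun t : ℝ => gammaIntegrand s (z + t)) atTop (𝓝 0) := by
  have hexp := (Real.tendsto_exp_neg_atTop_nhds_zero).const_mul (rexp (-z.re) * z.re ^ (s - 1))
  rw [mul_zero] at hexp
  refine squeeze_zero_norm' ?_ hexp
  filter_upwards [eventually_ge_atTop 0] with t ht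
  exact norm_gammaIntegrand_ray_le hs hz le_rfl ht

lemma integral_deriv_gammaIntegrand_ray {s : ℝ} {z : ℂ} (hs : s ≤ 1) (hz : 0 < z.re) :
    ∫ t in Ioi (0 : ℝ),
      (-gammaIntegrand s (z + t) + (s - 1) * gammaIntegrand (s - 1) (z + t)) =
      -gammaIntegrand s z := by
  rw [integral_Ioi_of_hasDerivAt_of_tendsto' (fun t ht => hasDerivAt_gammaIntegrand_ray s hz ht)
    ((integrableOn_gammaIntegrand_ray hs hz).neg.add
      ((integrableOn_gammaIntegrand_ray (by linarith) hz).const_mul _))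
    (tendsto_gammaIntegrand_ray hs hz)]
  simp

lemma norm_deriv_gammaIntegrand_ray_le {s δ t : ℝ} {z : ℂ} (hs : s ≤ 1) (hδ : 0 < δ)
    (hz : δ ≤ z.re) (ht : 0 ≤ t) :
    ‖-gammaIntegrand s (z + t) + (s - 1) * gammaIntegrand (s - 1) (z + t)‖ ≤
      (δ ^ (s - 1) + |s - 1| * δ ^ (s - 1 - 1)) * rexp (-t) := by
  have hexp : rexp (-z.re) ≤ 1 := Real.exp_le_one_iff.2 (by linarith)
  have hbound : ∀ σ ≤ 1, ‖gammaIntegrand σ (z + t)‖ ≤ δ ^ (σ - 1) * rexp (-t) := fun σ hσ =>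
    (norm_gammaIntegrand_ray_le hσ hδ hz ht).trans (by
      gcongr
      exact mul_le_of_le_one_left (rpow_nonneg hδ.le _) hexp)
  refine (norm_add_le _ _).trans ?_
  rw [norm_neg, norm_mul, ← ofReal_one, ← ofReal_sub, norm_real, Real.norm_eq_abs, add_mul,
    mul_assoc]
  gcongr
  exacts [hbound s hs, hbound (s - 1) (by linarith)]

theorem hasDerivAt_complexIncGamma {s : ℝ} {z : ℂ} (hs : s ≤ 1) (hz : 0 < z.re) :
    HasDerivAt (complexIncGamma s) (-gammaIntegrand s z) z := by
  have hre : ∀ w ∈ {w : ℂ | z.re / 2 < w.re}, 0 < w.re := fun w hw => (half_pos hz).trans hw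
  have hmeas : ∀ (σ : ℝ) {w : ℂ}, 0 < w.re → AEStronglyMeasurable
      (fun t : ℝ => gammaIntegrand σ (w + t)) (volume.restrict (Ioi 0)) := fun σ w hw =>
    ((continuousOn_gammaIntegrand_ray σ hw).mono Ioi_subset_Ici_self).aestronglyMeasurable
      measurableSet_Ioi
  have hnhds : {w : ℂ | z.re / 2 < w.re} ∈ 𝓝 z :=
    (isOpen_lt continuous_const continuous_re).mem_nhds (half_lt_self hz)
  rw [← integral_deriv_gammaIntegrand_ray hs hz]
  refine (hasDerivAt_integral_of_dominated_loc_of_deriv_le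
    (F' := fun w t => -gammaIntegrand s (w + t) + (s - 1) * gammaIntegrand (s - 1) (w + t))
    (bound := fun t => ((z.re / 2) ^ (s - 1) + |s - 1| * (z.re / 2) ^ (s - 1 - 1)) * rexp (-t))
    hnhds (eventually_of_mem hnhds fun w hw => hmeas s (hre w hw))
    (integrableOn_gammaIntegrand_ray hs hz) ((hmeas s hz).neg.add ((hmeas _ hz).const_mul _))
    ?_ ((integrableOn_exp_neg_Ioi 0).const_mul _) ?_).2
  · filter_upwards [ae_restrict_mem measurableSet_Ioi] with t ht w hw
    exact norm_deriv_gammaIntegrand_ray_le hs (half_pos hz) (le_of_lt hw) (le_of_lt ht)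
  · filter_upwards [ae_restrict_mem measurableSet_Ioi] with t ht w hw
    refine (hasDerivAt_gammaIntegrand s ?_).comp_add_const w t
    simpa using add_pos (hre w hw) ht

lemma complexIncGamma_ofReal (s : ℝ) {x : ℝ} (hx : 0 < x) :
    complexIncGamma s x = incGamma s x := by
  have hpre : (x + ·) ⁻¹' Ioi x = Ioi 0 := by ext; simp
  rw [incGamma, ← (measurePreserving_add_left volume x).setIntegral_preimage_emb
    (measurableEmbedding_addLeft x), hpre, ← integral_complex_ofReal]
  refine setIntegral_congr_fun measurableSet_Ioi fun t ht => ?_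
  have hxt : 0 ≤ x + t := (add_pos hx ht).le
  simp only [gammaIntegrand, ofReal_mul, ofReal_exp, ofReal_neg, ofReal_cpow hxt, ofReal_sub,
    ofReal_one, ofReal_add]

end IncompleteGamma

section FiniteJacobi

variable {R : Type*} [CommRing R] (q : R)

/-- The `q`-Pochhammer symbol `(q; q)_m = ∏_{1 ≤ i ≤ m} (1 - q ^ i)`. -/
def qPochhammer (m : ℕ) : R := ∏ i ∈ Finset.range m, (1 - q ^ (i + 1))

/-- The Gaussian binomial coefficient `[n, k]_q`, defined by the `q`-Pascal rule so that no
division by `1 - q ^ i` is needed. -/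
def gaussBinom : ℕ → ℕ → R
  | _, 0 => 1
  | 0, _ + 1 => 0
  | n + 1, k + 1 => gaussBinom n k + q ^ (k + 1) * gaussBinom n (k + 1)

@[simp] lemma gaussBinom_zero_right (n : ℕ) : gaussBinom q n 0 = 1 := by
  cases n <;> rfl

lemma gaussBinom_succ_succ (n k : ℕ) :
    gaussBinom q (n + 1) (k + 1) = gaussBinom q n k + q ^ (k + 1) * gaussBinom q n (k + 1) := rfl

lemma gaussBinom_eq_zero_of_lt {n k : ℕ} (h : n < k) : gaussBinom q n k = 0 := by
  induction n generalizing k with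
  | zero => obtain ⟨k, rfl⟩ := Nat.exists_eq_succ_of_ne_zero h.ne'; rfl
  | succ n ih =>
    obtain ⟨k, rfl⟩ := Nat.exists_eq_succ_of_ne_zero (Nat.ne_zero_of_lt h)
    rw [gaussBinom_succ_succ, ih (by omega), ih (by omega), mul_zero, add_zero]

lemma pow_mul_gaussBinom_congr {n k a b : ℕ} (h : k ≤ n → a = b) :
    q ^ a * gaussBinom q n k = q ^ b * gaussBinom q n k := by
  obtain hk | hk := le_or_gt k n
  · rw [h hk]
  · simp only [gaussBinom_eq_zero_of_lt q hk, mul_zero]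

lemma gaussBinom_succ_succ' (n k : ℕ) :
    gaussBinom q (n + 1) (k + 1) = q ^ (n - k) * gaussBinom q n k + gaussBinom q n (k + 1) := by
  induction n generalizing k with
  | zero => cases k <;> simp [gaussBinom]
  | succ n ih =>
    have hpascal (j : ℕ) : gaussBinom q n j + q ^ (j + 1) * gaussBinom q n (j + 1) =
        q ^ (n - j) * gaussBinom q n j + gaussBinom q n (j + 1) := ih j
    cases k with
    | zero =>
      have h0 := hpascal 0
      rw [gaussBinom_succ_succ, ih 0]
      simp only [gaussBinom_zero_right, Nat.sub_zero] at h0 ⊢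
      linear_combination h0
    | succ k =>
      have hpow : q ^ (k + 2 + (n - (k + 1))) * gaussBinom q n (k + 1) =
          q ^ (n - k + (k + 1)) * gaussBinom q n (k + 1) :=
        pow_mul_gaussBinom_congr q fun h => by omega
      rw [gaussBinom_succ_succ, ih (k + 1), Nat.add_sub_add_right, gaussBinom_succ_succ q n k]
      linear_combination hpascal k + hpascal (k + 1) + hpow

lemma gaussBinom_self (n : ℕ) : gaussBinom q n n = 1 := by
  induction n with
  | zero => rfl
  | succ n ih =>
    rw [gaussBinom_succ_succ, ih, gaussBinom_eq_zero_of_lt q n.lt_succ_self, mul_zero, add_zero]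

lemma gaussBinom_symm_add (k l : ℕ) : gaussBinom q (k + l) k = gaussBinom q (k + l) l := by
  induction k generalizing l with
  | zero => rw [zero_add, gaussBinom_zero_right, gaussBinom_self]
  | succ k ihk =>
    induction l with
    | zero => rw [add_zero, gaussBinom_zero_right, gaussBinom_self]
    | succ l ihl =>
      have hk := ihk (l + 1)
      rw [← add_assoc, add_right_comm] at hk
      rw [← add_assoc, gaussBinom_succ_succ, gaussBinom_succ_succ', Nat.add_sub_cancel, ihl, hk]
      ring

lemma qPochhammer_succ (m : ℕ) :
    qPochhammer q (m + 1) = qPochhammer q m * (1 - q ^ (m + 1)) :=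
  Finset.prod_range_succ _ m

lemma gaussBinom_mul_qPochhammer (k l : ℕ) :
    gaussBinom q (k + l) k * (qPochhammer q k * qPochhammer q l) = qPochhammer q (k + l) := by
  induction k generalizing l with
  | zero => simp [qPochhammer]
  | succ k ihk =>
    induction l with
    | zero => simp [gaussBinom_self, qPochhammer]
    | succ l ihl =>
      have hk := ihk (l + 1)
      rw [← add_assoc, add_right_comm, qPochhammer_succ q l] at hk
      rw [qPochhammer_succ q k] at ihl
      rw [← add_assoc, gaussBinom_succ_succ, qPochhammer_succ, qPochhammer_succ, qPochhammer_succ]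
      linear_combination (1 - q ^ (k + 1)) * hk + q ^ (k + 1) * (1 - q ^ (l + 1)) * ihl

lemma gaussBinom_add_two (n k : ℕ) :
    gaussBinom q (n + 2) (k + 2) = q ^ (n - k) * gaussBinom q n k +
      (1 + q ^ (n + 1)) * gaussBinom q n (k + 1) + q ^ (k + 2) * gaussBinom q n (k + 2) := by
  have hpow : q ^ (k + 2 + (n - (k + 1))) * gaussBinom q n (k + 1) =
      q ^ (n + 1) * gaussBinom q n (k + 1) := pow_mul_gaussBinom_congr q fun h => by omega
  rw [gaussBinom_succ_succ, gaussBinom_succ_succ', gaussBinom_succ_succ']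
  linear_combination hpow

lemma succ_choose_two (m : ℕ) : (m + 1).choose 2 = m.choose 2 + m := by
  rw [Nat.choose_succ_succ' m 1, Nat.choose_one_right, add_comm]

/-- The coefficient of `z ^ (-k)`, `0 ≤ k`, in
`(1 - z) * ∏_{1 ≤ i ≤ n} (1 - z * q ^ i) * (1 - z⁻¹ * q ^ i)`, the truncated theta product; the
coefficient of `z ^ (k + 1)` is its negative. -/
def thetaCoeff (n k : ℕ) : R :=
  (-1) ^ k * q ^ (k + 1).choose 2 * gaussBinom q (2 * n + 1) (n + 1 + k)

lemma thetaCoeff_eq_zero_of_lt {n k : ℕ} (h : n < k) : thetaCoeff q n k = 0 := by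
  rw [thetaCoeff, gaussBinom_eq_zero_of_lt q (by omega), mul_zero]

lemma thetaCoeff_succ_zero (n : ℕ) :
    thetaCoeff q (n + 1) 0 = (1 + q ^ (2 * n + 2)) * thetaCoeff q n 0 -
      q ^ (n + 1) * (-thetaCoeff q n 0 + thetaCoeff q n 1) := by
  have hsymm : gaussBinom q (2 * n + 1) n = gaussBinom q (2 * n + 1) (n + 1) := by
    simpa only [two_mul, add_assoc] using gaussBinom_symm_add q n (n + 1)
  have hrec := gaussBinom_add_two q (2 * n + 1) n
  rw [show 2 * n + 1 - n = n + 1 by omega, hsymm] at hrec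
  simp only [thetaCoeff, Nat.choose_self, Nat.choose_succ_self, add_zero, zero_add, mul_add_one,
    add_right_comm _ 2 1]
  linear_combination hrec

lemma thetaCoeff_succ_succ (n k : ℕ) :
    thetaCoeff q (n + 1) (k + 1) = (1 + q ^ (2 * n + 2)) * thetaCoeff q n (k + 1) -
      q ^ (n + 1) * (thetaCoeff q n k + thetaCoeff q n (k + 2)) := by
  have hrec := gaussBinom_add_two q (2 * n + 1) (n + 1 + k)
  have hpow : q ^ (k + 1 + (2 * n + 1 - (n + 1 + k))) * gaussBinom q (2 * n + 1) (n + 1 + k) =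
      q ^ (n + 1) * gaussBinom q (2 * n + 1) (n + 1 + k) :=
    pow_mul_gaussBinom_congr q fun h => by omega
  have hindex : n + 1 + 1 + (k + 1) = n + 1 + k + 2 := by ring
  simp only [thetaCoeff, mul_add_one, add_right_comm _ 2 1, hindex, succ_choose_two (k + 1),
    succ_choose_two (k + 2), ← add_assoc, hrec]
  linear_combination (-1) ^ (k + 1) * q ^ (k + 1).choose 2 * hpow

lemma sum_odd_mul_of_recurrence {a b : R} {c c' : ℕ → R} (h0 : c' 0 = a * c 0 - b * (-c 0 + c 1))
    (hsucc : ∀ k, c' (k + 1) = a * c (k + 1) - b * (c k + c (k + 2))) (m : ℕ) :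
    ∑ k ∈ Finset.range (m + 1), (2 * k + 1) * c' k =
      (a - 2 * b) * ∑ k ∈ Finset.range (m + 1), (2 * k + 1) * c k +
        b * ((2 * m + 3) * c m - (2 * m + 1) * c (m + 1)) := by
  induction m with
  | zero =>
    simp only [zero_add, Finset.sum_range_one, h0, Nat.cast_zero]
    ring
  | succ m ih =>
    rw [Finset.sum_range_succ, ih, Finset.sum_range_succ _ (m + 1), hsucc]
    push_cast
    ring

-- The derivative at `z = 1` of the expansion of the truncated theta product.
theorem sum_odd_mul_thetaCoeff (n : ℕ) :
    ∑ k ∈ Finset.range (n + 1), (2 * k + 1) * thetaCoeff q n k = qPochhammer q n ^ 2 := by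
  induction n with
  | zero => simp [thetaCoeff, qPochhammer, gaussBinom]
  | succ n ih =>
    rw [sum_odd_mul_of_recurrence (thetaCoeff_succ_zero q n) (thetaCoeff_succ_succ q n),
      Finset.sum_range_succ, ih, thetaCoeff_eq_zero_of_lt q (Nat.lt_succ_self n),
      thetaCoeff_eq_zero_of_lt q (by omega : n < n + 1 + 1), qPochhammer, qPochhammer,
      Finset.prod_range_succ]
    ring

end FiniteJacobi

section JacobiCube

open Filter Topology

variable {𝕜 : Type*} [NormedField 𝕜] {q : 𝕜}

lemma summable_norm_neg_pow_succ (hq : ‖q‖ < 1) : Summable fun i : ℕ => ‖-q ^ (i + 1)‖ := by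
  simpa only [norm_neg, norm_pow] using
    (summable_nat_add_iff 1).2 (summable_geometric_of_lt_one (norm_nonneg q) hq)

lemma one_add_neg_pow_succ_ne_zero (hq : ‖q‖ < 1) (i : ℕ) : 1 + -q ^ (i + 1) ≠ 0 := by
  rw [← sub_eq_add_neg, sub_ne_zero]
  intro h
  have hlt := pow_lt_one₀ (norm_nonneg q) hq i.succ_ne_zero
  rw [← norm_pow, ← h, norm_one] at hlt
  exact lt_irrefl _ hlt

lemma qPochhammer_ne_zero (hq : ‖q‖ < 1) (m : ℕ) : qPochhammer q m ≠ 0 :=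
  Finset.prod_ne_zero_iff.2 fun i _ => by
    rw [sub_eq_add_neg]
    exact one_add_neg_pow_succ_ne_zero hq i

lemma gaussBinom_add_left (hq : ‖q‖ < 1) (k l : ℕ) : gaussBinom q (k + l) k =
    qPochhammer q (k + l) * ((qPochhammer q k)⁻¹ * (qPochhammer q l)⁻¹) := by
  rw [← gaussBinom_mul_qPochhammer, ← mul_inv, mul_inv_cancel_right₀
    (mul_ne_zero (qPochhammer_ne_zero hq k) (qPochhammer_ne_zero hq l))]

lemma le_succ_choose_two (k : ℕ) : k ≤ (k + 1).choose 2 := by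
  rw [succ_choose_two]
  exact Nat.le_add_left _ _

lemma norm_odd_mul_thetaCoeff_le {C : ℝ} (hq : ‖q‖ < 1) (hC : ∀ n k, ‖gaussBinom q n k‖ ≤ C)
    (n k : ℕ) : ‖(2 * k + 1) * thetaCoeff q n k‖ ≤ (2 * k + 1) * (‖q‖ ^ k * C) := by
  have hodd : ‖(2 * k + 1 : 𝕜)‖ ≤ 2 * k + 1 := by
    simpa using Nat.norm_cast_le (α := 𝕜) (2 * k + 1)
  rw [thetaCoeff, norm_mul, norm_mul, norm_mul, norm_pow, norm_neg, norm_one, one_pow, one_mul,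
    norm_pow]
  refine mul_le_mul hodd ?_ (by positivity) (by positivity)
  exact mul_le_mul (pow_le_pow_of_le_one (norm_nonneg q) hq.le (le_succ_choose_two k)) (hC _ _)
    (norm_nonneg _) (by positivity)

lemma summable_odd_mul_geometric {r : ℝ} (hr : ‖r‖ < 1) :
    Summable fun k : ℕ => (2 * k + 1 : ℝ) * r ^ k := by
  have hlin := summable_pow_mul_geometric_of_norm_lt_one 1 hr
  simpa only [pow_one, add_mul, one_mul, mul_assoc] using
    (hlin.mul_left 2).add (summable_geometric_of_norm_lt_one hr)

variable [CompleteSpace 𝕜]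

lemma tendsto_qPochhammer (hq : ‖q‖ < 1) :
    Tendsto (qPochhammer q) atTop (𝓝 (∏' i : ℕ, (1 - q ^ (i + 1)))) := by
  have hmult : Multipliable fun i : ℕ => 1 + -q ^ (i + 1) :=
    _root_.multipliable_one_add_of_summable (summable_norm_neg_pow_succ hq)
  simp only [← sub_eq_add_neg] at hmult
  exact hmult.hasProd.tendsto_prod_nat

lemma tprod_one_sub_pow_succ_ne_zero (hq : ‖q‖ < 1) : ∏' i : ℕ, (1 - q ^ (i + 1)) ≠ 0 := by
  simpa only [← sub_eq_add_neg] using tprod_one_add_ne_zero_of_summable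
    (one_add_neg_pow_succ_ne_zero hq) (summable_norm_neg_pow_succ hq)

lemma tendsto_inv_qPochhammer (hq : ‖q‖ < 1) :
    Tendsto (fun m => (qPochhammer q m)⁻¹) atTop (𝓝 (∏' i : ℕ, (1 - q ^ (i + 1)))⁻¹) :=
  (tendsto_qPochhammer hq).inv₀ (tprod_one_sub_pow_succ_ne_zero hq)

lemma exists_norm_gaussBinom_le (hq : ‖q‖ < 1) : ∃ C, ∀ n k, ‖gaussBinom q n k‖ ≤ C := by
  obtain ⟨A, hA⟩ := (Metric.isBounded_range_of_tendsto _ (tendsto_qPochhammer hq)).exists_norm_le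
  obtain ⟨B, hB⟩ :=
    (Metric.isBounded_range_of_tendsto _ (tendsto_inv_qPochhammer hq)).exists_norm_le
  simp only [Set.forall_mem_range] at hA hB
  have hA0 : 0 ≤ A := (norm_nonneg _).trans (hA 0)
  have hB0 : 0 ≤ B := (norm_nonneg _).trans (hB 0)
  refine ⟨A * (B * B), fun n k => ?_⟩
  obtain hk | hk := le_or_gt k n
  · obtain ⟨l, rfl⟩ := Nat.exists_eq_add_of_le hk
    rw [gaussBinom_add_left hq, norm_mul, norm_mul]
    gcongr
    exacts [hA _, hB _, hB _]
  · rw [gaussBinom_eq_zero_of_lt q hk, norm_zero]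
    positivity

lemma tendsto_gaussBinom_central (hq : ‖q‖ < 1) (k : ℕ) :
    Tendsto (fun n => gaussBinom q (2 * n + 1) (n + 1 + k)) atTop
      (𝓝 (∏' i : ℕ, (1 - q ^ (i + 1)))⁻¹) := by
  have hindex (n : ℕ) : 2 * (n + k) + 1 = n + k + 1 + k + n := by ring
  have hlong : Tendsto (fun n => n + k + 1 + k + n) atTop atTop :=
    tendsto_atTop_mono (fun n => Nat.le_add_left n _) tendsto_id
  have hshort : Tendsto (fun n => n + k + 1 + k) atTop atTop :=
    tendsto_atTop_mono (fun n => show n ≤ _ by omega) tendsto_id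
  have hlim := ((tendsto_qPochhammer hq).comp hlong).mul
    (((tendsto_inv_qPochhammer hq).comp hshort).mul (tendsto_inv_qPochhammer hq))
  rw [mul_inv_cancel_left₀ (tprod_one_sub_pow_succ_ne_zero hq)] at hlim
  refine (tendsto_add_atTop_iff_nat k).1 ?_
  simpa only [hindex, gaussBinom_add_left hq, Function.comp_def] using hlim

theorem tprod_one_sub_pow_succ_pow_three (hq : ‖q‖ < 1) :
    (∏' i : ℕ, (1 - q ^ (i + 1))) ^ 3 =
      ∑' k : ℕ, (2 * k + 1) * ((-1) ^ k * q ^ (k + 1).choose 2) := by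
  set P := ∏' i : ℕ, (1 - q ^ (i + 1))
  obtain ⟨C, hC⟩ := exists_norm_gaussBinom_le hq
  have hlim : Tendsto (fun n => ∑' k : ℕ, (2 * k + 1) * thetaCoeff q n k) atTop
      (𝓝 (∑' k : ℕ, (2 * k + 1) * ((-1) ^ k * q ^ (k + 1).choose 2 * P⁻¹))) := by
    refine tendsto_tsum_of_dominated_convergence (bound := fun k => (2 * k + 1) * (‖q‖ ^ k * C))
      ?_ (fun k => ((tendsto_gaussBinom_central hq k).const_mul _).const_mul _)
      (Eventually.of_forall fun n k => norm_odd_mul_thetaCoeff_le hq hC n k)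
    simpa only [mul_assoc] using
      (summable_odd_mul_geometric ((norm_norm q).trans_lt hq)).mul_right C
  have hfinite : ∀ n, ∑' k : ℕ, (2 * k + 1) * thetaCoeff q n k = qPochhammer q n ^ 2 := by
    intro n
    rw [← sum_odd_mul_thetaCoeff, tsum_eq_sum]
    intro k hk
    rw [thetaCoeff_eq_zero_of_lt q (by simpa [Nat.lt_succ_iff] using hk), mul_zero]
  simp only [hfinite, ← mul_assoc, tsum_mul_right] at hlim
  have hsq := tendsto_nhds_unique ((tendsto_qPochhammer hq).pow 2) hlim
  rw [pow_succ, hsq, mul_assoc, inv_mul_cancel₀ (tprod_one_sub_pow_succ_ne_zero hq), mul_one]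
  simp only [mul_assoc]

end JacobiCube

section Polarization

open Filter Set Topology ComplexConjugate

lemma wirtingerBar_comp_conj {g : ℂ × ℂ → ℂ} {z : ℂ} (hg : DifferentiableAt ℂ g (z, conj z)) :
    wirtingerBar (fun z => g (z, conj z)) z = deriv (fun w => g (z, w)) (conj z) := by
  have hdiag : HasFDerivAt (fun z : ℂ => (z, conj z))
      ((ContinuousLinearMap.id ℝ ℂ).prod (conjCLE : ℂ →L[ℝ] ℂ)) z :=
    (hasFDerivAt_id z).prodMk conjCLE.hasFDerivAt
  have hcomp := (hg.hasFDerivAt.restrictScalars ℝ).comp z hdiag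
  have hslice : HasDerivAt (fun w => g (z, w)) (fderiv ℂ g (z, conj z) (0, 1)) (conj z) :=
    hg.hasFDerivAt.comp_hasDerivAt (conj z) ((hasDerivAt_const _ z).prodMk (hasDerivAt_id _))
  have hdir : ((1, 1) + I • (I, -I) : ℂ × ℂ) = (2 : ℂ) • (0, 1) := by
    ext <;> norm_num
  have hlin := congrArg (fderiv ℂ g (z, conj z)) hdir
  rw [map_add, map_smul, map_smul, smul_eq_mul, smul_eq_mul] at hlin
  rw [wirtingerBar, hslice.deriv]
  simp only [Function.comp_def] at hcomp
  rw [hcomp.fderiv]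
  simp only [ContinuousLinearMap.comp_apply, ContinuousLinearMap.prod_apply,
    ContinuousLinearMap.coe_restrictScalars', ContinuousLinearMap.id_apply,
    ContinuousLinearEquiv.coe_coe, conjCLE_apply, map_one, conj_I]
  rw [hlin]
  ring

/-- The constants `a_l = π (2l+1)² / 2` in the terms of `Gfun`. -/
def thetaExponent (l : ℕ) : ℝ := π * (2 * l + 1) ^ 2 / 2

lemma add_one_le_thetaExponent (l : ℕ) : (l : ℝ) + 1 ≤ thetaExponent l := by
  rw [thetaExponent]
  nlinarith [pi_gt_three, Nat.cast_nonneg (α := ℝ) l, sq_nonneg (2 * (l : ℝ) + 1)]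

lemma thetaExponent_pos (l : ℕ) : 0 < thetaExponent l :=
  (Nat.cast_add_one_pos l).trans_le (add_one_le_thetaExponent l)

/-- The coordinate `(z - w) / (2i)` on `ℂ × ℂ`, the polarization of `Im`: it takes the value
`Im τ` at `(z, w) = (τ, conj τ)`. -/
def polarIm (p : ℂ × ℂ) : ℂ := -(I / 2) * (p.1 - p.2)

lemma re_polarIm (p : ℂ × ℂ) : (polarIm p).re = (p.1.im - p.2.im) / 2 := by
  rw [polarIm, ← neg_mul_eq_neg_mul, neg_re, mul_re, div_ofNat_re, div_ofNat_im, I_re, I_im, sub_im]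
  ring

lemma polarIm_conj (z : ℂ) : polarIm (z, conj z) = z.im := by
  rw [polarIm, sub_conj, ofReal_mul, ofReal_ofNat]
  linear_combination (-(z.im : ℂ)) * I_sq

lemma re_thetaExponent_mul_polarIm_pos (l : ℕ) {p : ℂ × ℂ} (hp : 0 < (polarIm p).re) :
    0 < (thetaExponent l * polarIm p).re := by
  rw [re_ofReal_mul]
  exact mul_pos (thetaExponent_pos l) hp

/-- The `l`-th term of the series `Gfun`, with `conj τ` replaced by an independent variable. -/
def polarTerm (l : ℕ) (p : ℂ × ℂ) : ℂ :=
  (-1) ^ l * complexIncGamma (1 / 2) (thetaExponent l * polarIm p) *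
    cexp (-(I * thetaExponent l / 2 * p.1))

/-- The polarization of `Gfun`, in which `conj τ` is replaced by an independent variable. -/
def polarG (p : ℂ × ℂ) : ℂ := -(2 * I / √π) * ∑' l, polarTerm l p

lemma Gfun_eq_polarG {τ : ℂ} (hτ : 0 < τ.im) : Gfun τ = polarG (τ, conj τ) := by
  rw [Gfun, polarG]
  congr 2 with l
  have harg : (thetaExponent l : ℂ) * polarIm (τ, conj τ) =
      (π * (2 * l + 1) ^ 2 * τ.im / 2 : ℝ) := by
    rw [polarIm_conj, thetaExponent]
    push_cast
    ring
  rw [polarTerm, harg, complexIncGamma_ofReal _ (by positivity), thetaExponent]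
  push_cast
  ring_nf

/-- The domain `δ < Im z`, `Im w < -δ` in `ℂ × ℂ`; for `0 < δ` the series `polarG` converges
normally on it. -/
def polarDomain (δ : ℝ) : Set (ℂ × ℂ) := {z | δ < z.im} ×ˢ {w | w.im < -δ}

lemma isOpen_polarDomain (δ : ℝ) : IsOpen (polarDomain δ) :=
  (isOpen_lt continuous_const continuous_im).prod (isOpen_lt continuous_im continuous_const)

lemma mk_conj_mem_polarDomain {τ : ℂ} (hτ : 0 < τ.im) : (τ, conj τ) ∈ polarDomain (τ.im / 2) :=
  ⟨half_lt_self hτ, by simpa using half_lt_self hτ⟩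

lemma lt_re_polarIm {δ : ℝ} {p : ℂ × ℂ} (hp : p ∈ polarDomain δ) : δ < (polarIm p).re := by
  have hfst : δ < p.1.im := hp.1
  have hsnd : p.2.im < -δ := hp.2
  rw [re_polarIm]
  linarith

lemma norm_polarTerm_le {δ : ℝ} (hδ : 0 < δ) {p : ℂ × ℂ} (hp : p ∈ polarDomain δ) (l : ℕ) :
    ‖polarTerm l p‖ ≤ δ ^ (1 / 2 - 1 : ℝ) * rexp (-(δ / 2)) ^ l := by
  have hla := add_one_le_thetaExponent l
  have him : p.2.im < -δ := hp.2
  have hre : δ ≤ (thetaExponent l * polarIm p).re := by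
    rw [re_ofReal_mul]
    exact (lt_re_polarIm hp).le.trans (le_mul_of_one_le_left (hδ.trans (lt_re_polarIm hp)).le
      (by linarith [Nat.cast_nonneg (α := ℝ) l]))
  have hgamma := norm_complexIncGamma_le (s := 1 / 2) (by norm_num) (hδ.trans_le hre)
  have hexp : (-(I * thetaExponent l / 2 * p.1)).re = thetaExponent l * p.1.im / 2 := by
    simp only [neg_re, mul_re, mul_im, div_ofNat_re, div_ofNat_im, I_re, I_im, ofReal_re, ofReal_im]
    ring
  calc ‖polarTerm l p‖
      = ‖complexIncGamma (1 / 2) (thetaExponent l * polarIm p)‖ *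
          rexp (thetaExponent l * p.1.im / 2) := by
        rw [polarTerm, norm_mul, norm_mul, norm_pow, norm_neg, norm_one, one_pow, one_mul,
          Complex.norm_exp, hexp]
    _ ≤ rexp (-(thetaExponent l * polarIm p).re) * δ ^ (1 / 2 - 1 : ℝ) *
          rexp (thetaExponent l * p.1.im / 2) := by
        gcongr
        exact hgamma.trans (mul_le_mul_of_nonneg_left
          (rpow_le_rpow_of_nonpos hδ hre (by norm_num)) (Real.exp_nonneg _))
    _ = δ ^ (1 / 2 - 1 : ℝ) * rexp (thetaExponent l * p.2.im / 2) := by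
        rw [mul_right_comm, ← Real.exp_add, mul_comm, re_ofReal_mul, re_polarIm]
        ring_nf
    _ ≤ δ ^ (1 / 2 - 1 : ℝ) * rexp (-(δ / 2)) ^ l := by
        rw [← Real.exp_nat_mul]
        gcongr
        nlinarith

lemma summable_polarTerm_bound {δ : ℝ} (hδ : 0 < δ) :
    Summable fun l : ℕ => δ ^ (1 / 2 - 1 : ℝ) * rexp (-(δ / 2)) ^ l :=
  (summable_geometric_of_lt_one (Real.exp_nonneg _)
    (Real.exp_lt_one_iff.2 (by linarith))).mul_left _

lemma differentiableAt_polarTerm (l : ℕ) {p : ℂ × ℂ} (hp : 0 < (polarIm p).re) :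
    DifferentiableAt ℂ (polarTerm l) p := by
  have hre := re_thetaExponent_mul_polarIm_pos l hp
  have harg : DifferentiableAt ℂ (fun p => (thetaExponent l : ℂ) * polarIm p) p := by
    unfold polarIm
    fun_prop
  have hgamma := (hasDerivAt_complexIncGamma (s := 1 / 2) (by norm_num) hre).differentiableAt
  exact ((hgamma.comp p harg).const_mul _).mul (by fun_prop)

lemma differentiableOn_polarTerm_comp {δ : ℝ} (hδ : 0 < δ) {c : ℂ → ℂ × ℂ}
    (hc : Differentiable ℂ c) (l : ℕ) :
    DifferentiableOn ℂ (fun z => polarTerm l (c z)) (c ⁻¹' polarDomain δ) := fun z hz =>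
  ((differentiableAt_polarTerm l (hδ.trans (lt_re_polarIm hz))).comp z
    hc.differentiableAt).differentiableWithinAt

lemma differentiableAt_tsum_polarTerm_comp {δ : ℝ} (hδ : 0 < δ) {c : ℂ → ℂ × ℂ}
    (hc : Differentiable ℂ c) {z : ℂ} (hz : c z ∈ polarDomain δ) :
    DifferentiableAt ℂ (fun z => ∑' l, polarTerm l (c z)) z := by
  have hU : IsOpen (c ⁻¹' polarDomain δ) := (isOpen_polarDomain δ).preimage hc.continuous
  exact (differentiableOn_tsum_of_summable_norm (summable_polarTerm_bound hδ)
    (differentiableOn_polarTerm_comp hδ hc) hU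
    fun l z hz => norm_polarTerm_le hδ hz l).differentiableAt (hU.mem_nhds hz)

lemma hasSum_deriv_polarTerm_comp {δ : ℝ} (hδ : 0 < δ) {c : ℂ → ℂ × ℂ}
    (hc : Differentiable ℂ c) {z : ℂ} (hz : c z ∈ polarDomain δ) :
    HasSum (fun l => deriv (fun z => polarTerm l (c z)) z)
      (deriv (fun z => ∑' l, polarTerm l (c z)) z) :=
  hasSum_deriv_of_summable_norm (summable_polarTerm_bound hδ)
    (differentiableOn_polarTerm_comp hδ hc) ((isOpen_polarDomain δ).preimage hc.continuous)
    (fun l _ hz => norm_polarTerm_le hδ hz l) hz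

lemma analyticAt_polarG {δ : ℝ} (hδ : 0 < δ) {p : ℂ × ℂ} (hp : p ∈ polarDomain δ) :
    AnalyticAt ℂ polarG p := by
  refine analyticAt_const.mul
    (analyticAt_of_continuousOn_of_differentiableAt (isOpen_polarDomain δ) ?_ ?_ ?_ hp)
  · exact continuousOn_tsum (fun l p hp => (differentiableAt_polarTerm l
      (hδ.trans (lt_re_polarIm hp))).continuousAt.continuousWithinAt)
      (summable_polarTerm_bound hδ) fun l p hp => norm_polarTerm_le hδ hp l
  · exact fun p hp => differentiableAt_tsum_polarTerm_comp hδ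
      (c := fun z => (z, p.2)) (by fun_prop) hp
  · exact fun p hp => differentiableAt_tsum_polarTerm_comp hδ
      (c := fun w => (p.1, w)) (by fun_prop) hp

lemma analyticAt_polarG_conj {τ : ℂ} (hτ : 0 < τ.im) : AnalyticAt ℂ polarG (τ, conj τ) :=
  analyticAt_polarG (half_pos hτ) (mk_conj_mem_polarDomain hτ)

lemma Gfun_eventuallyEq_polarG {τ : ℂ} (hτ : 0 < τ.im) :
    Gfun =ᶠ[𝓝 τ] fun z => polarG (z, conj z) :=
  eventually_of_mem ((isOpen_lt continuous_const continuous_im).mem_nhds hτ)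
    fun _ hz => Gfun_eq_polarG hz

theorem analyticAt_Gfun {τ : ℂ} (hτ : 0 < τ.im) : AnalyticAt ℝ Gfun τ := by
  have hdiag : AnalyticAt ℝ (fun z : ℂ => (z, conj z)) τ :=
    analyticAt_id.prod ((conjCLE : ℂ →L[ℝ] ℂ).analyticAt τ)
  have hpolar : AnalyticAt ℝ polarG (τ, conj τ) := (analyticAt_polarG_conj hτ).restrictScalars
  exact (hpolar.comp_of_eq hdiag rfl).congr (Gfun_eventuallyEq_polarG hτ).symm

lemma hasDerivAt_polarTerm_snd (l : ℕ) {z w : ℂ} (h : 0 < (polarIm (z, w)).re) :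
    HasDerivAt (fun w => polarTerm l (z, w))
      (-(I / 2) * ((-1) ^ l * (thetaExponent l *
        (thetaExponent l * polarIm (z, w)) ^ ((1 / 2 : ℝ) - 1 : ℂ)) *
        cexp (-(I * thetaExponent l / 2 * w)))) w := by
  have hre := re_thetaExponent_mul_polarIm_pos l h
  have harg : HasDerivAt (fun w => (thetaExponent l : ℂ) * polarIm (z, w))
      (thetaExponent l * (-(I / 2) * -1)) w :=
    (((hasDerivAt_id w).const_sub z).const_mul _).const_mul _
  have hgamma := hasDerivAt_complexIncGamma (s := 1 / 2) (by norm_num) hre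
  refine (((hgamma.comp w harg).const_mul ((-1) ^ l)).mul_const
    (cexp (-(I * thetaExponent l / 2 * z)))).congr_deriv ?_
  have hexp : cexp (-(thetaExponent l * polarIm (z, w))) *
      cexp (-(I * thetaExponent l / 2 * z)) = cexp (-(I * thetaExponent l / 2 * w)) := by
    rw [← Complex.exp_add, polarIm]
    ring_nf
  rw [gammaIntegrand, ← hexp]
  ring

lemma mul_rpow_thetaExponent_mul (l : ℕ) {y : ℝ} (hy : 0 < y) :
    thetaExponent l * (thetaExponent l * y) ^ (1 / 2 - 1 : ℝ) = √π * ((2 * l + 1) / √(2 * y)) := by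
  have ha : thetaExponent l = √π ^ 2 * (2 * l + 1) ^ 2 / √2 ^ 2 := by
    rw [sq_sqrt pi_pos.le, sq_sqrt zero_le_two, thetaExponent]
  have hsqrt : √(thetaExponent l * y) = √π * (2 * l + 1) / √2 * √y := by
    rw [Real.sqrt_mul (thetaExponent_pos l).le, ha, ← mul_pow, ← div_pow,
      Real.sqrt_sq (by positivity)]
  have hpow : (1 / 2 - 1 : ℝ) = -(1 / 2) := by norm_num
  rw [hpow, rpow_neg (mul_pos (thetaExponent_pos l) hy).le, ← Real.sqrt_eq_rpow, hsqrt,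
    Real.sqrt_mul zero_le_two, ha]
  field_simp

lemma deriv_polarTerm_snd_conj (l : ℕ) {τ : ℂ} (hτ : 0 < τ.im) :
    deriv (fun w => polarTerm l (τ, w)) (conj τ) =
      -(I / 2) * (√π * (√(2 * τ.im) : ℂ)⁻¹) *
        conj ((-1) ^ l * (2 * l + 1) * cexp (π * I * τ * (2 * l + 1) ^ 2 / 4)) := by
  have hre : 0 < (polarIm (τ, conj τ)).re := by rwa [polarIm_conj, ofReal_re]
  have hfactor : (thetaExponent l : ℂ) *
      (thetaExponent l * τ.im : ℂ) ^ ((1 / 2 : ℝ) - 1 : ℂ) =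
      √π * ((2 * l + 1) / √(2 * τ.im)) := by
    rw [← ofReal_mul, ← ofReal_one, ← ofReal_sub,
      ← ofReal_cpow (mul_pos (thetaExponent_pos l) hτ).le, ← ofReal_mul,
      mul_rpow_thetaExponent_mul l hτ]
    push_cast
    rfl
  have hexp : conj (cexp (π * I * τ * (2 * l + 1) ^ 2 / 4)) =
      cexp (-(I * thetaExponent l / 2 * conj τ)) := by
    rw [← Complex.exp_conj, thetaExponent]
    simp only [map_mul, map_div₀, map_pow, map_add, map_one, conj_ofReal, conj_I, map_ofNat,
      map_natCast]
    push_cast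
    ring_nf
  rw [(hasDerivAt_polarTerm_snd l hre).deriv, polarIm_conj, hfactor, map_mul, hexp]
  simp only [map_mul, map_pow, map_neg, map_one, map_add, map_ofNat, map_natCast]
  ring

theorem wirtingerBar_Gfun {τ : ℂ} (hτ : 0 < τ.im) :
    wirtingerBar Gfun τ = -(√(2 * τ.im) : ℂ)⁻¹ *
      ∑' l : ℕ, conj ((-1) ^ l * (2 * l + 1) * cexp (π * I * τ * (2 * l + 1) ^ 2 / 4)) := by
  have hderiv := hasSum_deriv_polarTerm_comp (half_pos hτ) (c := fun w => (τ, w)) (by fun_prop)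
    (mk_conj_mem_polarDomain hτ)
  have hconst : -(2 * I / √π) * (-(I / 2) * (√π * (√(2 * τ.im) : ℂ)⁻¹)) =
      -(√(2 * τ.im) : ℂ)⁻¹ := by
    have hpi : (√π : ℂ) ≠ 0 := by exact_mod_cast (sqrt_pos.2 pi_pos).ne'
    field_simp
    linear_combination (√(2 * τ.im) : ℂ)⁻¹ * I_sq
  calc wirtingerBar Gfun τ
      = wirtingerBar (fun z => polarG (z, conj z)) τ := by
        rw [wirtingerBar, wirtingerBar, (Gfun_eventuallyEq_polarG hτ).fderiv_eq]
    _ = deriv (fun w => polarG (τ, w)) (conj τ) :=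
        wirtingerBar_comp_conj (analyticAt_polarG_conj hτ).differentiableAt
    _ = -(2 * I / √π) * ∑' l, deriv (fun w => polarTerm l (τ, w)) (conj τ) := by
        rw [hderiv.tsum_eq]
        exact deriv_const_mul_field _
    _ = _ := by
        simp only [deriv_polarTerm_snd_conj _ hτ, tsum_mul_left]
        rw [← mul_assoc, hconst]

end Polarization

section EtaCube

lemma norm_nome_lt_one {τ : ℂ} (hτ : 0 < τ.im) : ‖nome τ‖ < 1 :=
  UpperHalfPlane.norm_exp_two_pi_I_lt_one ⟨τ, hτ⟩

lemma dedekindEta_pow_three {τ : ℂ} (hτ : 0 < τ.im) :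
    dedekindEta τ ^ 3 =
      ∑' l : ℕ, (-1) ^ l * (2 * (l : ℂ) + 1) * cexp (π * I * τ * (2 * l + 1) ^ 2 / 4) := by
  rw [dedekindEta, mul_pow, tprod_one_sub_pow_succ_pow_three (norm_nome_lt_one hτ),
    ← tsum_mul_left]
  refine tsum_congr fun l => ?_
  have hexp : cexp (π * I * τ / 12) ^ 3 * nome τ ^ (l + 1).choose 2 =
      cexp (π * I * τ * (2 * l + 1) ^ 2 / 4) := by
    rw [nome, ← Complex.exp_nat_mul, ← Complex.exp_nat_mul, ← Complex.exp_add,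
      Nat.cast_choose_two]
    push_cast
    ring_nf
  rw [← hexp]
  ring

end EtaCube

/-- `G` is real analytic on ℍ and `∂G/∂τ̄ = −(2 Im τ)^{−1/2} conj(η(τ)³)`:
the shadow of `Q` is proportional to `η³`. -/
theorem stmt18 :
    (∀ τ : ℂ, 0 < τ.im → AnalyticAt ℝ Gfun τ) ∧
    (∀ τ : ℂ, 0 < τ.im →
      wirtingerBar Gfun τ =
        -((Real.sqrt (2 * τ.im) : ℂ))⁻¹ * starRingEnd ℂ (dedekindEta τ ^ 3)) := by
  refine ⟨fun τ hτ => analyticAt_Gfun hτ, fun τ hτ => ?_⟩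
  rw [wirtingerBar_Gfun hτ, dedekindEta_pow_three hτ, Complex.conj_tsum]
end
end
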